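/- Let α, β ≥ 1 and ε ∈ (0,1). There exists a constant C depending only on α, β, ε such that for every multiplicative function g : ℕ → ℝ with g(n) ≥ 0 for all n, g(p^v) ≤ α^v for all primes p and all integers v ≥ 1, and g(n) ≤ β n^{ε³/1000} for all n ≥ 1, and for all reals X, Y, H with 2 ≤ X^ε ≤ Y ≤ X and 1 ≤ H ≤ X, one has ∑_{l=1}^{⌊H⌋} ∑_{X ≤ n ≤ X+Y} g(n) g(n+l) ≤ C · H · Y · ( ∏_{p ≤ X, p prime} (1 + (g(p) − 1)/p) )². -/

import Mathlib

open Finset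

namespace ShiuAux

lemma pow_dvd_fact {p N : ℕ} (hp : p.Prime) : p ^ (N / p) ∣ N.factorial := by
  rw [hp.pow_dvd_factorial_iff (b := Nat.log p N + 2) (by omega)]
  have := Finset.single_le_sum (f := fun i => N / p ^ i) (s := Finset.Ico 1 (Nat.log p N + 2))
    (fun i _ => Nat.zero_le _) (a := 1) (by simp)
  simpa using this

lemma mertens (z : ℝ) (hz : 2 ≤ z) (P : Finset ℕ) (hP : ∀ p ∈ P, p.Prime ∧ (p : ℝ) ≤ z) :
    ∑ p ∈ P, Real.log p / p ≤ 3 * Real.log z := by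
  set N := ⌊z⌋₊ with hN
  have hN2 : 2 ≤ N := Nat.le_floor (by exact_mod_cast hz)
  have hNpos : (0:ℝ) < N := by positivity
  have hNz : (N:ℝ) ≤ z := Nat.floor_le (by linarith)
  have hPN : ∀ p ∈ P, p ≤ N := fun p hp => Nat.le_floor (hP p hp).2
  have h1 : ∏ p ∈ P, p ^ (N / p) ∣ N.factorial := by
    apply Finset.prod_dvd_of_isRelPrime
    · intro p hp q hq hpq
      apply Nat.coprime_iff_isRelPrime.1
      exact Nat.Coprime.pow _ _ ((Nat.coprime_primes (hP p hp).1 (hP q hq).1).2 hpq)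
    · intro p hp
      exact pow_dvd_fact (hP p hp).1
  have h2 : (∏ p ∈ P, (p:ℝ) ^ (N / p)) ≤ (N:ℝ) ^ N := by
    have := (Nat.le_of_dvd (Nat.factorial_pos _) h1).trans (Nat.factorial_le_pow N)
    exact_mod_cast this
  have hpp : ∀ p ∈ P, (0:ℝ) < p := fun p hp => by exact_mod_cast (hP p hp).1.pos
  have hlp : ∀ p ∈ P, (0:ℝ) ≤ Real.log p := fun p hp =>
    Real.log_nonneg (by exact_mod_cast (hP p hp).1.one_le)
  have h3 : ∑ p ∈ P, ((N / p : ℕ) : ℝ) * Real.log p ≤ N * Real.log N := by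
    have := Real.log_le_log (Finset.prod_pos fun p hp => pow_pos (hpp p hp) _) h2
    rw [Real.log_prod (fun p hp => (pow_pos (hpp p hp) _).ne'), Real.log_pow] at this
    simpa [Real.log_pow] using this
  have h4 : ∑ p ∈ P, Real.log p ≤ Real.log 4 * N := by
    have := Chebyshev.theta_le_log4_mul_x (x := N) (by positivity)
    refine le_trans ?_ this
    rw [Chebyshev.theta_eq_sum_Icc]
    apply Finset.sum_le_sum_of_subset_of_nonneg
    · intro p hp
      simp only [Nat.floor_natCast, Finset.mem_filter, Finset.mem_Icc]
      exact ⟨⟨by omega, hPN p hp⟩, (hP p hp).1⟩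
    · intro p _ _
      exact Real.log_natCast_nonneg p
  have h5 : ∑ p ∈ P, (N:ℝ) * (Real.log p / p) ≤ N * Real.log N + Real.log 4 * N := by
    have : ∀ p ∈ P, (N:ℝ) * (Real.log p / p) ≤ ((N / p : ℕ) : ℝ) * Real.log p + Real.log p := by
      intro p hp
      have h : (N:ℝ) / p ≤ ((N / p : ℕ) : ℝ) + 1 := by
        rw [← Nat.floor_div_eq_div (K := ℝ)]
        exact (Nat.lt_floor_add_one _).le
      have := mul_le_mul_of_nonneg_right h (hlp p hp)
      calc (N:ℝ) * (Real.log p / p) = N / p * Real.log p := by ring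
        _ ≤ _ := this
        _ = _ := by ring
    refine (Finset.sum_le_sum this).trans ?_
    rw [Finset.sum_add_distrib]
    linarith
  rw [← Finset.mul_sum] at h5
  have h6 : ∑ p ∈ P, Real.log p / p ≤ Real.log N + Real.log 4 := by
    have : (N:ℝ) * ∑ p ∈ P, Real.log p / p ≤ N * (Real.log N + Real.log 4) := by linarith
    exact le_of_mul_le_mul_left this hNpos
  have h7 : Real.log N ≤ Real.log z := Real.log_le_log hNpos hNz
  have h8 : Real.log 4 ≤ 2 * Real.log z := by
    have : Real.log 4 = 2 * Real.log 2 := by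
      rw [show (4:ℝ) = 2 ^ 2 by norm_num, Real.log_pow]; norm_num
    rw [this]
    have := Real.log_le_log (by norm_num) hz
    linarith
  linarith

/-- sum of reciprocals of primes in `[z, X]`. -/
lemma mertens_inv (z X : ℝ) (hz : 1 < z) (hX : 2 ≤ X) (P : Finset ℕ)
    (hP : ∀ p ∈ P, p.Prime ∧ z ≤ (p:ℝ) ∧ (p : ℝ) ≤ X) :
    ∑ p ∈ P, 1 / (p:ℝ) ≤ 3 * Real.log X / Real.log z := by
  have hlz : 0 < Real.log z := Real.log_pos hz
  rw [le_div_iff₀ hlz, Finset.sum_mul]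
  refine le_trans (Finset.sum_le_sum ?_) (mertens X hX P fun p hp => ⟨(hP p hp).1, (hP p hp).2.2⟩)
  intro p hp
  have hp0 : (0:ℝ) < p := by exact_mod_cast (hP p hp).1.pos
  have := Real.log_le_log (by linarith) (hP p hp).2.1
  rw [one_div_mul_eq_div]
  gcongr

lemma sum_alt {V U : Finset ℕ} (hVU : V ⊆ U) (P : Finset ℕ) (hU : U ⊆ P) :
    ∑ T ∈ P.powerset with V ⊆ T ∧ T ⊆ U, (-1:ℝ) ^ #T = if U = V then (-1) ^ #V else 0 := by
  have : ∑ T ∈ P.powerset with V ⊆ T ∧ T ⊆ U, (-1:ℝ) ^ #T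
      = ∑ W ∈ (U \ V).powerset, (-1) ^ #V * (-1:ℝ) ^ #W := by
    symm
    refine Finset.sum_bij' (fun W _ => V ∪ W) (fun T _ => T \ V) ?_ ?_ ?_ ?_ ?_
    · intro W hW
      rw [mem_powerset] at hW
      have : W ⊆ U := hW.trans sdiff_subset
      simp only [mem_filter, mem_powerset]
      exact ⟨union_subset (hVU.trans hU) (this.trans hU), subset_union_left,
        union_subset hVU this⟩
    · intro T hT
      simp only [mem_filter, mem_powerset] at hT ⊢
      exact sdiff_subset_sdiff hT.2.2 le_rfl
    · intro W hW
      rw [mem_powerset] at hW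
      ext x
      have := @hW x
      simp only [mem_sdiff, mem_union] at *
      tauto
    · intro T hT
      simp only [mem_filter, mem_powerset] at hT
      exact union_sdiff_of_subset hT.2.1
    · intro W hW
      rw [mem_powerset] at hW
      rw [card_union_of_disjoint, pow_add]
      exact (disjoint_sdiff).mono_right hW
  rw [this, ← Finset.mul_sum]
  have h2 : ∑ W ∈ (U \ V).powerset, (-1:ℝ) ^ #W = if U \ V = ∅ then 1 else 0 := by
    have := Finset.sum_powerset_neg_one_pow_card (x := U \ V)
    have h := congrArg (Int.cast : ℤ → ℝ) this
    push_cast at h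
    rw [h]
  rw [h2]
  by_cases h : U = V
  · simp [h]
  · have : ¬ U \ V = ∅ := by
      rw [sdiff_eq_empty_iff_subset]
      intro h'
      exact h (Subset.antisymm h' hVU)
    simp [h, this]

end ShiuAux

namespace ShiuAux

noncomputable def wt (T : Finset ℕ) : ℝ := ∏ p ∈ T, (2 / ((p:ℝ) - 2))
noncomputable def hh (T : Finset ℕ) : ℝ := ∏ p ∈ T, (2 / (p:ℝ))
noncomputable def lev (P : Finset ℕ) (D : ℝ) : Finset (Finset ℕ) :=
  P.powerset.filter fun T => ∏ p ∈ T, (p:ℝ) ≤ D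
noncomputable def GG (P : Finset ℕ) (D : ℝ) : ℝ := ∑ U ∈ lev P D, wt U
noncomputable def lam (P : Finset ℕ) (D : ℝ) (T : Finset ℕ) : ℝ :=
  (-1) ^ #T / (hh T * GG P D) * ∑ U ∈ lev P D with T ⊆ U, wt U


lemma hP3 {P : Finset ℕ} (hP : ∀ p ∈ P, p.Prime ∧ 3 ≤ p)
    {p : ℕ} (hp : p ∈ P) : (3:ℝ) ≤ p := by exact_mod_cast (hP p hp).2

lemma wt_pos {P : Finset ℕ} (hP : ∀ p ∈ P, p.Prime ∧ 3 ≤ p)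
    {T : Finset ℕ} (hT : T ⊆ P) : 0 < wt T := by
  apply Finset.prod_pos
  intro p hp
  have := hP3 hP (hT hp)
  apply div_pos <;> linarith

lemma hh_pos {P : Finset ℕ} (hP : ∀ p ∈ P, p.Prime ∧ 3 ≤ p)
    {T : Finset ℕ} (hT : T ⊆ P) : 0 < hh T := by
  apply Finset.prod_pos
  intro p hp
  have := hP3 hP (hT hp)
  apply div_pos <;> linarith

lemma wt_div_hh {P : Finset ℕ} (hP : ∀ p ∈ P, p.Prime ∧ 3 ≤ p)
    {T : Finset ℕ} (hT : T ⊆ P) : wt T / hh T ≤ 3 ^ #T := by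
  unfold wt hh
  rw [← Finset.prod_div_distrib]
  rw [← Finset.prod_const]
  apply Finset.prod_le_prod
  · intro p hp
    have := hP3 hP (hT hp)
    have h2 : (0:ℝ) < p - 2 := by linarith
    positivity
  intro p hp
  have := hP3 hP (hT hp)
  have h2 : (0:ℝ) < p - 2 := by linarith
  have h3 : (0:ℝ) < p := by linarith
  rw [div_div_div_eq, div_le_iff₀ (by positivity)]
  linarith

lemma empty_mem_lev {P : Finset ℕ} {D : ℝ} (hD : 1 ≤ D)
    : ∅ ∈ lev P D := by simp [lev, hD]

lemma lev_sub {P : Finset ℕ} {D : ℝ}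
    {U : Finset ℕ} (hU : U ∈ lev P D) : U ⊆ P := by
  simp only [lev, mem_filter, mem_powerset] at hU; exact hU.1

lemma GG_pos {P : Finset ℕ} {D : ℝ} (hP : ∀ p ∈ P, p.Prime ∧ 3 ≤ p) (hD : 1 ≤ D)
    : 0 < GG P D := by
  apply Finset.sum_pos
  · intro U hU; exact wt_pos hP (lev_sub hU)
  · exact ⟨_, empty_mem_lev hD⟩

lemma lam_empty {P : Finset ℕ} {D : ℝ} (hP : ∀ p ∈ P, p.Prime ∧ 3 ≤ p) (hD : 1 ≤ D)
    : lam P D ∅ = 1 := by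
  have := (GG_pos hP hD).ne'
  simp only [lam, hh, card_empty, pow_zero, prod_empty, one_mul, empty_subset, filter_true]
  change 1 / GG P D * GG P D = 1
  field_simp

lemma lev_down {P : Finset ℕ} {D : ℝ} (hP : ∀ p ∈ P, p.Prime ∧ 3 ≤ p)
    {T U : Finset ℕ} (hU : U ∈ lev P D) (hT : T ⊆ U) : T ∈ lev P D := by
  have hUP := lev_sub hU
  simp only [lev, mem_filter, mem_powerset] at hU ⊢
  refine ⟨hT.trans hU.1, le_trans ?_ hU.2⟩
  rw [← Finset.prod_sdiff hT]
  apply le_mul_of_one_le_left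
  · exact Finset.prod_nonneg fun p _ => by positivity
  · rw [← Finset.prod_const_one (s := U \ T)]
    apply Finset.prod_le_prod
    · intros; norm_num
    · intro p hp
      have := hP3 hP (hUP (sdiff_subset hp))
      linarith

lemma lam_zero {P : Finset ℕ} {D : ℝ} (hP : ∀ p ∈ P, p.Prime ∧ 3 ≤ p)
    {T : Finset ℕ} (hT : T ∉ lev P D) : lam P D T = 0 := by
  unfold lam
  rw [Finset.sum_eq_zero, mul_zero]
  intro U hU
  rw [mem_filter] at hU
  exact absurd (lev_down hP hU.1 hU.2) hT

lemma lam_abs {P : Finset ℕ} {D : ℝ} (hP : ∀ p ∈ P, p.Prime ∧ 3 ≤ p) (hD : 1 ≤ D)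
    {T : Finset ℕ} (hT : T ⊆ P) : |lam P D T| ≤ 3 ^ #T := by
  have hG := GG_pos hP hD
  have hh0 := hh_pos hP hT
  have hs : ∑ U ∈ lev P D with T ⊆ U, wt U ≤ wt T * GG P D := by
    have h1 : ∀ U ∈ (lev P D).filter (T ⊆ ·), wt U = wt T * wt (U \ T) := by
      intro U hU
      rw [mem_filter] at hU
      unfold wt
      rw [mul_comm, Finset.prod_sdiff hU.2]
    rw [Finset.sum_congr rfl h1, ← Finset.mul_sum]
    apply mul_le_mul_of_nonneg_left _ (wt_pos hP hT).le
    have hinj : Set.InjOn (fun U => U \ T) ((lev P D).filter (T ⊆ ·) : Finset (Finset ℕ)) := by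
      intro U hU V hV h
      simp only [coe_filter, Set.mem_ofPred_eq] at hU hV
      have h' : U \ T = V \ T := h
      rw [← Finset.sdiff_union_of_subset hU.2, ← Finset.sdiff_union_of_subset hV.2, h']
    rw [← Finset.sum_image (f := fun U => wt U) hinj]
    apply Finset.sum_le_sum_of_subset_of_nonneg
    · intro V hV
      simp only [mem_image, mem_filter] at hV
      obtain ⟨U, hU, rfl⟩ := hV
      exact lev_down hP hU.1 sdiff_subset
    · intro U hU _
      exact (wt_pos hP (lev_sub hU)).le
  have hs0 : 0 ≤ ∑ U ∈ lev P D with T ⊆ U, wt U := by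
    apply Finset.sum_nonneg
    intro U hU
    rw [mem_filter] at hU
    exact (wt_pos hP (lev_sub hU.1)).le
  unfold lam
  rw [abs_mul, abs_div, abs_pow, abs_neg, abs_one, one_pow, abs_of_pos (mul_pos hh0 hG),
    abs_of_nonneg hs0]
  refine le_trans ?_ (wt_div_hh hP hT)
  rw [one_div_mul_eq_div, div_le_div_iff₀ (by positivity) hh0]
  calc _ ≤ wt T * GG P D * hh T := by gcongr
    _ = _ := by ring

lemma lam_inv {P : Finset ℕ} {D : ℝ} (hP : ∀ p ∈ P, p.Prime ∧ 3 ≤ p)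
    {V : Finset ℕ} (hV : V ⊆ P) :
    ∑ T ∈ P.powerset with V ⊆ T, hh T * lam P D T
      = if V ∈ lev P D then (-1) ^ #V * wt V / GG P D else 0 := by
  have h1 : ∀ T ∈ P.powerset.filter (V ⊆ ·), hh T * lam P D T
      = ∑ U ∈ lev P D, if T ⊆ U then (-1) ^ #T * (wt U / GG P D) else 0 := by
    intro T hT
    simp only [mem_filter, mem_powerset] at hT
    have := (hh_pos hP hT.1).ne'
    rw [← Finset.sum_filter, ← Finset.mul_sum, ← Finset.sum_div]
    unfold lam
    field_simp
  rw [Finset.sum_congr rfl h1, Finset.sum_comm]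
  have h2 : ∀ U ∈ lev P D, (∑ T ∈ P.powerset with V ⊆ T,
      if T ⊆ U then (-1 : ℝ) ^ #T * (wt U / GG P D) else 0)
      = if U = V then (-1) ^ #V * wt V / GG P D else 0 := by
    intro U hU
    rw [← Finset.sum_filter, Finset.filter_filter, ← Finset.sum_mul]
    by_cases hVU : V ⊆ U
    · rw [sum_alt hVU P (lev_sub hU)]
      split_ifs with h
      · rw [h]; ring
      · simp
    · rw [Finset.sum_eq_zero, if_neg]
      · simp
      · rintro rfl; exact hVU le_rfl
      · intro T hT
        simp only [mem_filter] at hT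
        exact absurd (hT.2.1.trans hT.2.2) hVU
  rw [Finset.sum_congr rfl h2, Finset.sum_ite_eq']

lemma hh_union {P : Finset ℕ} (hP : ∀ p ∈ P, p.Prime ∧ 3 ≤ p)
    {T T' : Finset ℕ} (hT : T ⊆ P) (hT' : T' ⊆ P) :
    hh (T ∪ T') = ∑ V ∈ P.powerset, if V ⊆ T ∧ V ⊆ T' then (wt V)⁻¹ * (hh T * hh T') else 0 := by
  have h1 : hh (T ∪ T') * hh (T ∩ T') = hh T * hh T' := Finset.prod_union_inter
  have hi : T ∩ T' ⊆ P := inter_subset_left.trans hT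
  have h0 := hh_pos hP hi
  have h2 : (hh (T ∩ T'))⁻¹ = ∑ V ∈ (T ∩ T').powerset, (wt V)⁻¹ := by
    have : ∀ V, (wt V)⁻¹ = ∏ p ∈ V, (2 / ((p:ℝ) - 2))⁻¹ := by
      intro V; unfold wt; rw [Finset.prod_inv_distrib]
    simp_rw [this]
    rw [← Finset.prod_one_add]
    unfold hh
    rw [← Finset.prod_inv_distrib]
    apply Finset.prod_congr rfl
    intro p hp
    have := hP3 hP (hi hp)
    have h4 : (p:ℝ) - 2 ≠ 0 := by intro h; linarith
    have h5 : (p:ℝ) ≠ 0 := by intro h; linarith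
    field_simp
    ring
  rw [← Finset.sum_filter, ← Finset.sum_mul]
  have h3 : P.powerset.filter (fun V => V ⊆ T ∧ V ⊆ T') = (T ∩ T').powerset := by
    ext V
    simp only [mem_filter, mem_powerset, subset_inter_iff]
    constructor
    · exact fun h => h.2
    · exact fun h => ⟨h.1.trans hT, h⟩
  rw [h3, ← h2, ← h1]
  field_simp

lemma main_quad {P : Finset ℕ} {D : ℝ} (hP : ∀ p ∈ P, p.Prime ∧ 3 ≤ p) (hD : 1 ≤ D)
    :
    ∑ T ∈ P.powerset, ∑ T' ∈ P.powerset, lam P D T * lam P D T' * hh (T ∪ T') = 1 / GG P D := by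
  have hG := GG_pos hP hD
  have h1 : ∑ T ∈ P.powerset, ∑ T' ∈ P.powerset, lam P D T * lam P D T' * hh (T ∪ T')
      = ∑ V ∈ P.powerset, (wt V)⁻¹ * (∑ T ∈ P.powerset with V ⊆ T, hh T * lam P D T) ^ 2 := by
    have : ∀ T ∈ P.powerset, ∀ T' ∈ P.powerset, lam P D T * lam P D T' * hh (T ∪ T')
        = ∑ V ∈ P.powerset, (wt V)⁻¹ * ((if V ⊆ T then hh T * lam P D T else 0) *
            (if V ⊆ T' then hh T' * lam P D T' else 0)) := by
      intro T hT T' hT'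
      rw [mem_powerset] at hT hT'
      rw [hh_union hP hT hT', Finset.mul_sum]
      apply Finset.sum_congr rfl
      intro V _
      by_cases h1 : V ⊆ T <;> by_cases h2 : V ⊆ T' <;> simp [h1, h2]
      ring
    rw [Finset.sum_congr rfl fun T hT => Finset.sum_congr rfl (this T hT)]
    rw [Finset.sum_congr rfl fun T hT => Finset.sum_comm, Finset.sum_comm]
    apply Finset.sum_congr rfl
    intro V _
    rw [Finset.sum_filter, sq, Finset.sum_mul_sum, Finset.mul_sum]
    apply Finset.sum_congr rfl
    intro T _
    rw [Finset.mul_sum]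
  rw [h1]
  have h2 : ∀ V ∈ P.powerset, (wt V)⁻¹ * (∑ T ∈ P.powerset with V ⊆ T, hh T * lam P D T) ^ 2
      = if V ∈ lev P D then wt V / GG P D ^ 2 else 0 := by
    intro V hV
    rw [mem_powerset] at hV
    have := (wt_pos hP hV).ne'
    rw [lam_inv hP hV]
    split_ifs
    · rw [div_pow, mul_pow, ← pow_mul, mul_comm (#V) 2, pow_mul]
      norm_num
      field_simp
    · simp
  rw [Finset.sum_congr rfl h2, ← Finset.sum_filter]
  have h3 : P.powerset.filter (· ∈ lev P D) = lev P D := by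
    ext V; simp only [mem_filter, mem_powerset]
    exact ⟨fun h => h.2, fun h => ⟨lev_sub h, h⟩⟩
  rw [h3, ← Finset.sum_div]
  change GG P D / GG P D ^ 2 = _
  field_simp

lemma lev_err {P : Finset ℕ} {D : ℝ} (hP : ∀ p ∈ P, p.Prime ∧ 3 ≤ p)
    : ∑ T ∈ lev P D, (6:ℝ) ^ #T ≤ D ^ 3 ∨ D < 1 := by
  by_cases hD : D < 1
  · right; exact hD
  left
  push Not at hD
  have h1 : ∀ T ∈ lev P D, (6:ℝ) ^ #T ≤ D ^ 2 := by
    intro T hT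
    have hTP := lev_sub hT
    simp only [lev, mem_filter, mem_powerset] at hT
    calc (6:ℝ) ^ #T ≤ ∏ p ∈ T, (p:ℝ) ^ 2 := by
          rw [← Finset.prod_const]
          apply Finset.prod_le_prod
          · intros; norm_num
          · intro p hp
            have := hP3 hP (hTP hp)
            nlinarith
      _ = (∏ p ∈ T, (p:ℝ)) ^ 2 := by rw [Finset.prod_pow]
      _ ≤ D ^ 2 := by
          apply pow_le_pow_left₀ _ hT.2
          apply Finset.prod_nonneg; intros; positivity
  have hcard : (#(lev P D) : ℝ) ≤ D := by
    have : #(lev P D) ≤ #(Finset.Icc 1 ⌊D⌋₊) := by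
      apply Finset.card_le_card_of_injOn (fun T => ∏ p ∈ T, p)
      · intro T hT
        have hTP := lev_sub hT
        simp only [lev, coe_filter, mem_powerset, Set.mem_ofPred_eq] at hT
        simp only [coe_Icc, Set.mem_Icc]
        constructor
        · apply Nat.one_le_iff_ne_zero.2
          rw [Finset.prod_ne_zero_iff]
          intro p hp
          exact (hP p (hTP hp)).1.ne_zero
        · apply Nat.le_floor
          push_cast
          exact hT.2
      · intro T hT U hU h
        have hTP := lev_sub hT
        have hUP := lev_sub hU
        have h1 := Nat.primeFactors_prod (s := T) (fun p hp => (hP p (hTP hp)).1)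
        have h2 := Nat.primeFactors_prod (s := U) (fun p hp => (hP p (hUP hp)).1)
        rw [← h1, ← h2]
        exact congrArg _ h
    rw [Nat.card_Icc, Nat.add_sub_cancel] at this
    exact le_trans (by exact_mod_cast this) (Nat.floor_le (by linarith))
  calc ∑ T ∈ lev P D, (6:ℝ) ^ #T ≤ ∑ T ∈ lev P D, D ^ 2 := Finset.sum_le_sum h1
    _ = #(lev P D) * D ^ 2 := by rw [Finset.sum_const, nsmul_eq_mul]
    _ ≤ D * D ^ 2 := by gcongr
    _ = D ^ 3 := by ring

lemma selberg {P : Finset ℕ} {D : ℝ} (hP : ∀ p ∈ P, p.Prime ∧ 3 ≤ p) (hD : 1 ≤ D)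
    (S : Finset ℕ) (bad : ℕ → ℕ → Prop) [∀ p n, Decidable (bad p n)] (M : ℝ)
    (hS : ∀ T ⊆ P, |(#(S.filter fun n => ∀ p ∈ T, bad p n) : ℝ) - M * hh T| ≤ 2 * 2 ^ #T) :
    (#(S.filter fun n => ∀ p ∈ P, ¬ bad p n) : ℝ) ≤ M / GG P D + 2 * D ^ 6 := by
  have h1 : (#(S.filter fun n => ∀ p ∈ P, ¬ bad p n) : ℝ)
      ≤ ∑ n ∈ S, (∑ T ∈ P.powerset with ∀ p ∈ T, bad p n, lam P D T) ^ 2 := by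
    rw [Finset.card_filter]
    push_cast
    apply Finset.sum_le_sum
    intro n _
    split_ifs with h
    · have : (P.powerset.filter fun T => ∀ p ∈ T, bad p n) = {∅} := by
        ext T
        simp only [mem_filter, mem_powerset, mem_singleton]
        constructor
        · rintro ⟨h1, h2⟩
          rw [Finset.eq_empty_iff_forall_notMem]
          intro p hp
          exact h p (h1 hp) (h2 p hp)
        · rintro rfl; simp
      rw [this, Finset.sum_singleton, lam_empty hP hD]
      norm_num
    · positivity
  have h2 : ∑ n ∈ S, (∑ T ∈ P.powerset with ∀ p ∈ T, bad p n, lam P D T) ^ 2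
      = ∑ T ∈ P.powerset, ∑ T' ∈ P.powerset, lam P D T * lam P D T' *
          (#(S.filter fun n => ∀ p ∈ T ∪ T', bad p n) : ℝ) := by
    have : ∀ n ∈ S, (∑ T ∈ P.powerset with ∀ p ∈ T, bad p n, lam P D T) ^ 2
        = ∑ T ∈ P.powerset, ∑ T' ∈ P.powerset, lam P D T * lam P D T' *
          (if ∀ p ∈ T ∪ T', bad p n then 1 else 0) := by
      intro n _
      rw [Finset.sum_filter, sq, Finset.sum_mul_sum]
      apply Finset.sum_congr rfl; intro T _
      apply Finset.sum_congr rfl; intro T' _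
      have : (∀ p ∈ T ∪ T', bad p n) ↔ (∀ p ∈ T, bad p n) ∧ (∀ p ∈ T', bad p n) := by
        simp only [mem_union]
        constructor
        · exact fun h => ⟨fun p hp => h p (Or.inl hp), fun p hp => h p (Or.inr hp)⟩
        · rintro ⟨h1, h2⟩ p (hp | hp)
          · exact h1 p hp
          · exact h2 p hp
      simp only [this]
      by_cases h1 : ∀ p ∈ T, bad p n
      · by_cases h2 : ∀ p ∈ T', bad p n
        · rw [if_pos h1, if_pos h2, if_pos ⟨h1, h2⟩, mul_one]
        · have h3 : ¬ ((∀ p ∈ T, bad p n) ∧ (∀ p ∈ T', bad p n)) := fun h => h2 h.2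
          rw [if_neg h2, if_neg h3, mul_zero, mul_zero]
      · have h3 : ¬ ((∀ p ∈ T, bad p n) ∧ (∀ p ∈ T', bad p n)) := fun h => h1 h.1
        rw [if_neg h1, if_neg h3, mul_zero, zero_mul]
    rw [Finset.sum_congr rfl this, Finset.sum_comm]
    apply Finset.sum_congr rfl; intro T _
    rw [Finset.sum_comm]
    apply Finset.sum_congr rfl; intro T' _
    rw [← Finset.mul_sum, Finset.card_filter]
    push_cast
    rfl
  have h3 : ∑ T ∈ P.powerset, ∑ T' ∈ P.powerset, lam P D T * lam P D T' *
          (#(S.filter fun n => ∀ p ∈ T ∪ T', bad p n) : ℝ)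
      ≤ ∑ T ∈ P.powerset, ∑ T' ∈ P.powerset, (M * (lam P D T * lam P D T' * hh (T ∪ T')) +
          2 * ((|lam P D T| * 2 ^ #T) * (|lam P D T'| * 2 ^ #T'))) := by
    apply Finset.sum_le_sum; intro T hT
    apply Finset.sum_le_sum; intro T' hT'
    rw [mem_powerset] at hT hT'
    have h := hS (T ∪ T') (union_subset hT hT')
    set N := (#(S.filter fun n => ∀ p ∈ T ∪ T', bad p n) : ℝ)
    set a := lam P D T
    set b := lam P D T'
    have hc : (2:ℝ) ^ #(T ∪ T') ≤ 2 ^ #T * 2 ^ #T' := by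
      rw [← pow_add]
      exact pow_le_pow_right₀ (by norm_num) (card_union_le _ _)
    have h5 : a * b * (N - M * hh (T ∪ T')) ≤ |a| * |b| * (2 * (2 ^ #T * 2 ^ #T')) := by
      calc _ ≤ |a * b * (N - M * hh (T ∪ T'))| := le_abs_self _
        _ = |a| * |b| * |N - M * hh (T ∪ T')| := by rw [abs_mul, abs_mul]
        _ ≤ |a| * |b| * (2 * (2 ^ #T * 2 ^ #T')) := by
            gcongr
            exact h.trans (by linarith)
    nlinarith [h5]
  have h4 : ∑ T ∈ P.powerset, |lam P D T| * 2 ^ #T ≤ D ^ 3 := by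
    have : ∑ T ∈ P.powerset, |lam P D T| * 2 ^ #T = ∑ T ∈ lev P D, |lam P D T| * 2 ^ #T := by
      symm
      apply Finset.sum_subset (Finset.filter_subset _ _)
      intro T _ hT
      rw [lam_zero hP hT]; simp
    rw [this]
    refine le_trans (Finset.sum_le_sum (g := fun T => (6:ℝ) ^ #T) ?_) ((lev_err hP).resolve_right (by linarith))
    intro T hT
    calc |lam P D T| * 2 ^ #T ≤ 3 ^ #T * 2 ^ #T := by
          gcongr; exact lam_abs hP hD (lev_sub hT)
      _ = 6 ^ #T := by rw [← mul_pow]; norm_num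
  have h4' : 0 ≤ ∑ T ∈ P.powerset, |lam P D T| * 2 ^ #T :=
    Finset.sum_nonneg fun T _ => by positivity
  rw [h2] at h1
  refine h1.trans (h3.trans ?_)
  simp_rw [Finset.sum_add_distrib, ← Finset.mul_sum, main_quad hP hD, ← Finset.sum_mul]
  have : (∑ T ∈ P.powerset, |lam P D T| * 2 ^ #T) * (∑ T ∈ P.powerset, |lam P D T| * 2 ^ #T)
      ≤ D ^ 3 * D ^ 3 := by gcongr
  rw [mul_one_div]
  nlinarith

end ShiuAux

namespace ShiuAux

lemma exp_sub_one_le {x : ℝ} (h0 : 0 ≤ x) (h1 : x ≤ 1) : Real.exp x - 1 ≤ 3 * x := by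
  have := Real.abs_exp_sub_one_sub_id_le (x := x) (by rw [abs_of_nonneg h0]; exact h1)
  have h2 := (abs_le.1 this).2
  nlinarith

lemma rankin_G {P : Finset ℕ} (z : ℝ) (hz : 2 ≤ z) (hP : ∀ p ∈ P, p.Prime ∧ 3 ≤ p)
    (hPz : ∀ p ∈ P, (p:ℝ) ≤ z) :
    1 / GG P (z ^ 55) ≤ 2 * ∏ p ∈ P, (1 - 2 / (p:ℝ)) := by
  have hD : (1:ℝ) ≤ z ^ 55 := one_le_pow₀ (by linarith)
  have hlz : 0 < Real.log z := Real.log_pos (by linarith)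
  set V := ∏ p ∈ P, (1 + 2 / ((p:ℝ) - 2)) with hV
  have hp3 : ∀ p ∈ P, (3:ℝ) ≤ p := fun p hp => hP3 hP hp
  have hVpos : 0 < V := Finset.prod_pos fun p hp => by
    have := hp3 p hp
    have : (0:ℝ) < p - 2 := by linarith
    positivity
  have hVinv : ∏ p ∈ P, (1 - 2 / (p:ℝ)) = 1 / V := by
    rw [eq_div_iff hVpos.ne', hV, ← Finset.prod_mul_distrib]
    apply Finset.prod_eq_one
    intro p hp
    have := hp3 p hp
    have h1 : (p:ℝ) - 2 ≠ 0 := by intro h; linarith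
    have h2 : (p:ℝ) ≠ 0 := by intro h; linarith
    field_simp
    ring
  rw [hVinv]
  have hsum : ∑ T ∈ P.powerset, wt T = V := by
    rw [hV, Finset.prod_one_add]; rfl
  have hsplit : GG P (z ^ 55) + ∑ T ∈ P.powerset with ¬ (∏ p ∈ T, ((p:ℕ):ℝ) ≤ z ^ 55), wt T = V := by
    rw [← hsum]; exact Finset.sum_filter_add_sum_filter_not _ _ _
  have htail : ∑ T ∈ P.powerset with ¬ (∏ p ∈ T, ((p:ℕ):ℝ) ≤ z ^ 55), wt T ≤ V / 2 := by
    set e : ℕ → ℝ := fun p => Real.exp (Real.log p / Real.log z) with he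
    have hw0 : ∀ p ∈ P, 0 ≤ 2 / ((p:ℝ) - 2) := fun p hp => by
      have := hp3 p hp
      have : (0:ℝ) < p - 2 := by linarith
      positivity
    have h1 : ∀ T ∈ P.powerset.filter (fun T => ¬ (∏ p ∈ T, ((p:ℕ):ℝ) ≤ z ^ 55)),
        wt T ≤ Real.exp (-55) * ∏ p ∈ T, (2 / ((p:ℝ) - 2) * e p) := by
      intro T hT
      simp only [mem_filter, mem_powerset, not_le] at hT
      obtain ⟨hTP, hT⟩ := hT
      rw [Finset.prod_mul_distrib]
      have h2 : ∏ p ∈ T, e p = Real.exp ((Real.log (∏ p ∈ T, (p:ℝ))) / Real.log z) := by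
        rw [Real.log_prod (fun p hp => by have := hp3 p (hTP hp); intro h; linarith),
          Finset.sum_div, Real.exp_sum]
      have h3 : (55:ℝ) ≤ (Real.log (∏ p ∈ T, (p:ℝ))) / Real.log z := by
        rw [le_div_iff₀ hlz]
        have := Real.log_le_log (by positivity) hT.le
        rw [Real.log_pow] at this
        exact_mod_cast this
      have h4 : Real.exp 55 ≤ ∏ p ∈ T, e p := by rw [h2]; exact Real.exp_le_exp.2 h3
      have hw := wt_pos hP hTP
      change wt T ≤ Real.exp (-55) * (wt T * ∏ p ∈ T, e p)
      calc wt T = Real.exp (-55) * (wt T * Real.exp 55) := by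
            rw [mul_left_comm, ← Real.exp_add]; norm_num
        _ ≤ _ := by gcongr
    have h5 : ∏ p ∈ P, (1 + 2 / ((p:ℝ) - 2) * e p) ≤ V * Real.exp 54 := by
      have h6 : ∀ p ∈ P, (1 + 2 / ((p:ℝ) - 2) * e p)
          ≤ (1 + 2 / ((p:ℝ) - 2)) * Real.exp (18 / Real.log z * (Real.log p / p)) := by
        intro p hp
        have h3 := hp3 p hp
        have hw := hw0 p hp
        have hlp : 0 ≤ Real.log p := Real.log_nonneg (by linarith)
        have hx : Real.log p / Real.log z ≤ 1 := by
          rw [div_le_one hlz]; exact Real.log_le_log (by linarith) (hPz p hp)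
        have hx0 : 0 ≤ Real.log p / Real.log z := by positivity
        have h7 := exp_sub_one_le hx0 hx
        have hw6 : 2 / ((p:ℝ) - 2) ≤ 6 / p := by
          rw [div_le_div_iff₀ (by linarith) (by linarith)]; linarith
        have he1 : 0 ≤ e p - 1 := by
          have := Real.add_one_le_exp (Real.log p / Real.log z)
          simp only [he]; linarith
        have h8 : 2 / ((p:ℝ) - 2) * (e p - 1) ≤ 18 / Real.log z * (Real.log p / p) := by
          calc _ ≤ 6 / p * (3 * (Real.log p / Real.log z)) := by
                apply mul_le_mul hw6 h7 he1 (by positivity)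
            _ = _ := by ring
        have h9 := Real.add_one_le_exp (18 / Real.log z * (Real.log p / p))
        have h10 : 0 ≤ 2 / ((p:ℝ) - 2) * (e p - 1) := mul_nonneg hw he1
        set w := 2 / ((p:ℝ) - 2)
        have h11 : 1 + w * (e p - 1) ≤ Real.exp (18 / Real.log z * (Real.log p / p)) := by linarith
        calc 1 + w * e p ≤ (1 + w) * (1 + w * (e p - 1)) := by nlinarith
          _ ≤ _ := by gcongr
      calc _ ≤ ∏ p ∈ P, ((1 + 2 / ((p:ℝ) - 2)) * Real.exp (18 / Real.log z * (Real.log p / p))) := by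
            apply Finset.prod_le_prod _ h6
            intro p hp
            have := hw0 p hp
            have : 0 < e p := Real.exp_pos _
            positivity
        _ = V * Real.exp (18 / Real.log z * ∑ p ∈ P, Real.log p / p) := by
            rw [Finset.prod_mul_distrib, ← Real.exp_sum, Finset.mul_sum]
        _ ≤ V * Real.exp 54 := by
            gcongr
            have := mertens z hz P fun p hp => ⟨(hP p hp).1, hPz p hp⟩
            calc _ ≤ 18 / Real.log z * (3 * Real.log z) := by gcongr
              _ = 54 := by field_simp; norm_num
    calc _ ≤ ∑ T ∈ P.powerset with ¬ (∏ p ∈ T, ((p:ℕ):ℝ) ≤ z ^ 55),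
          Real.exp (-55) * ∏ p ∈ T, (2 / ((p:ℝ) - 2) * e p) := Finset.sum_le_sum h1
      _ ≤ ∑ T ∈ P.powerset, Real.exp (-55) * ∏ p ∈ T, (2 / ((p:ℝ) - 2) * e p) := by
          apply Finset.sum_le_sum_of_subset_of_nonneg (Finset.filter_subset _ _)
          intro T hT _
          rw [mem_powerset] at hT
          apply mul_nonneg (Real.exp_pos _).le
          apply Finset.prod_nonneg
          intro p hp
          exact mul_nonneg (hw0 p (hT hp)) (Real.exp_pos _).le
      _ = Real.exp (-55) * ∏ p ∈ P, (1 + 2 / ((p:ℝ) - 2) * e p) := by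
          rw [Finset.prod_one_add, Finset.mul_sum]
      _ ≤ Real.exp (-55) * (V * Real.exp 54) := by gcongr
      _ = V * Real.exp (-1) := by
          rw [mul_left_comm, ← Real.exp_add]; norm_num
      _ ≤ V / 2 := by
          rw [div_eq_mul_inv]
          gcongr
          rw [Real.exp_neg]
          gcongr
          have := Real.add_one_le_exp 1
          linarith
  have hG : V / 2 ≤ GG P (z ^ 55) := by linarith
  calc 1 / GG P (z ^ 55) ≤ 1 / (V / 2) := by gcongr
    _ = 2 * (1 / V) := by field_simp

lemma prod_lower {P : Finset ℕ} (z : ℝ) (hz : 2 ≤ z) (hP : ∀ p ∈ P, p.Prime ∧ 3 ≤ p)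
    (hPz : ∀ p ∈ P, (p:ℝ) ≤ z) :
    1 ≤ z ^ 30 * ∏ p ∈ P, (1 - 2 / (p:ℝ)) := by
  have hp3 : ∀ p ∈ P, (3:ℝ) ≤ p := fun p hp => hP3 hP hp
  have hlz : 0 < Real.log z := Real.log_pos (by linarith)
  have h1 : ∀ p ∈ P, Real.exp (-(6 * (1 / (p:ℝ)))) ≤ 1 - 2 / (p:ℝ) := by
    intro p hp
    have h3 := hp3 p hp
    have hp0 : (0:ℝ) < p := by linarith
    rw [Real.exp_neg, inv_le_comm₀ (Real.exp_pos _)]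
    · have := Real.add_one_le_exp (6 * (1 / (p:ℝ)))
      refine le_trans ?_ this
      have h2 : (0:ℝ) < 1 - 2 / p := by
        rw [sub_pos, div_lt_one hp0]; linarith
      rw [inv_le_iff_one_le_mul₀ h2]
      have : (6 * (1 / (p:ℝ)) + 1) * (1 - 2 / p) = 1 + (4 - 12 / p) / p := by field_simp; ring
      rw [this]
      have : (0:ℝ) ≤ (4 - 12 / p) / p := by
        apply div_nonneg _ hp0.le
        rw [sub_nonneg, div_le_iff₀ hp0]; linarith
      linarith
    · rw [sub_pos, div_lt_one hp0]; linarith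
  have h2 : Real.exp (-(6 * ∑ p ∈ P, 1 / (p:ℝ))) ≤ ∏ p ∈ P, (1 - 2 / (p:ℝ)) := by
    rw [Finset.mul_sum, ← Finset.sum_neg_distrib, Real.exp_sum]
    apply Finset.prod_le_prod _ h1
    intros; positivity
  have h3 := mertens_inv 3 z (by norm_num) hz P (fun p hp => ⟨(hP p hp).1, hp3 p hp, hPz p hp⟩)
  have hl3 : 1 ≤ Real.log 3 := by
    rw [Real.le_log_iff_exp_le (by norm_num)]
    have := Real.exp_one_lt_d9
    linarith
  have h4 : 3 * Real.log z / Real.log 3 ≤ 5 * Real.log z := by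
    rw [div_le_iff₀ (by linarith)]
    nlinarith
  have h5 : Real.exp (30 * Real.log z) = z ^ 30 := by
    rw [show (30:ℝ) = ((30:ℕ):ℝ) by norm_num, Real.exp_nat_mul, Real.exp_log (by linarith)]
  calc (1:ℝ) = Real.exp (30 * Real.log z) * Real.exp (-(30 * Real.log z)) := by
        rw [← Real.exp_add]; simp
    _ ≤ Real.exp (30 * Real.log z) * Real.exp (-(6 * ∑ p ∈ P, 1 / (p:ℝ))) := by
        apply mul_le_mul_of_nonneg_left (Real.exp_le_exp.2 (by linarith)) (Real.exp_pos _).le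
    _ ≤ _ := by rw [h5]; gcongr

/-- Counting one residue class in the interval. -/
lemma count_mod (X Y : ℝ) (hX : 1 ≤ X) (hY : 0 ≤ Y) (L v : ℕ) (hL : 0 < L) :
    |(#((Icc ⌈X⌉₊ ⌊X + Y⌋₊).filter fun n => n ≡ v [MOD L]) : ℝ) - Y / L| ≤ 2 := by
  have hc : 1 ≤ ⌈X⌉₊ := Nat.one_le_iff_ne_zero.2 (by
    have : 0 < ⌈X⌉₊ := Nat.ceil_pos.2 (by linarith)
    omega)
  have hI : Icc ⌈X⌉₊ ⌊X + Y⌋₊ = Ioc (⌈X⌉₊ - 1) ⌊X + Y⌋₊ := by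
    ext n; simp only [mem_Icc, mem_Ioc]; omega
  have h := Nat.Ioc_filter_modEq_card (⌈X⌉₊ - 1) ⌊X + Y⌋₊ hL v
  rw [hI]
  set N := #((Ioc (⌈X⌉₊ - 1) ⌊X + Y⌋₊).filter fun n => n ≡ v [MOD L])
  set a := ⌈X⌉₊ - 1 with ha
  set b := ⌊X + Y⌋₊ with hb
  have haX : (a:ℝ) < X ∧ X - 1 ≤ a := by
    have h1 := Nat.ceil_lt_add_one (show 0 ≤ X by linarith)
    have h2 := Nat.le_ceil X
    have h3 : (a:ℝ) = ⌈X⌉₊ - 1 := by rw [ha]; push_cast [hc]; ring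
    constructor <;> linarith
  have hbX : (b:ℝ) ≤ X + Y ∧ X + Y < b + 1 :=
    ⟨Nat.floor_le (by linarith), Nat.lt_floor_add_one _⟩
  have hab : a ≤ b := by
    have h1 : (a:ℝ) < b + 1 := by linarith [haX.1, hbX.2]
    have h2 : a < b + 1 := by exact_mod_cast h1
    omega
  have hLq : (0:ℚ) < L := by exact_mod_cast hL
  have hmono : ⌊((a:ℚ) - v) / L⌋ ≤ ⌊((b:ℚ) - v) / L⌋ := by
    apply Int.floor_le_floor
    have : (a:ℚ) ≤ b := by exact_mod_cast hab
    gcongr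
  rw [max_eq_left (by omega)] at h
  have hq : |(N:ℚ) - ((b:ℚ) - a) / L| ≤ 1 := by
    have h1 : (N:ℚ) = (⌊((b:ℚ) - v) / L⌋ : ℚ) - (⌊((a:ℚ) - v) / L⌋ : ℚ) := by exact_mod_cast h
    have e : ((b:ℚ) - a) / L = ((b:ℚ) - v) / L - ((a:ℚ) - v) / L := by ring
    rw [h1, e, abs_le]
    have h2 := Int.floor_le (((b:ℚ) - v) / L)
    have h3 := Int.lt_floor_add_one (((b:ℚ) - v) / L)
    have h4 := Int.floor_le (((a:ℚ) - v) / L)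
    have h5 := Int.lt_floor_add_one (((a:ℚ) - v) / L)
    constructor <;> linarith
  have hr : |(N:ℝ) - ((b:ℝ) - a) / L| ≤ 1 := by
    have := (Rat.cast_le (K := ℝ)).2 hq
    push_cast at this
    exact this
  have hL1 : (1:ℝ) ≤ L := by exact_mod_cast hL
  have h6 : |((b:ℝ) - a) / L - Y / L| ≤ 1 := by
    rw [← sub_div, abs_div, abs_of_pos (show (0:ℝ) < L by linarith), div_le_one (by linarith)]
    refine le_trans ?_ hL1
    rw [abs_le]
    constructor <;> linarith [haX.1, haX.2, hbX.1, hbX.2]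
  calc |(N:ℝ) - Y / L| = |((N:ℝ) - ((b:ℝ) - a) / L) + (((b:ℝ) - a) / L - Y / L)| := by ring_nf
    _ ≤ _ := abs_add_le _ _
    _ ≤ 2 := by linarith

lemma modEq_lcm_iff (A B n v : ℕ) :
    (n ≡ v [MOD A] ∧ n ≡ v [MOD B]) ↔ n ≡ v [MOD Nat.lcm A B] := by
  simp only [Nat.modEq_iff_dvd, Int.natCast_dvd, Nat.lcm_dvd_iff]

lemma count_two (X Y : ℝ) (hX : 1 ≤ X) (hY : 0 ≤ Y) (A B l : ℕ) (hA : 0 < A) (hB : 0 < B)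
    (hl : Nat.gcd A B ∣ l) :
    |(#((Icc ⌈X⌉₊ ⌊X + Y⌋₊).filter fun n => A ∣ n ∧ B ∣ n + l) : ℝ) - Y / (Nat.lcm A B)| ≤ 2 := by
  have hex : ∃ v : ℕ, A ∣ v ∧ B ∣ v + l := by
    have h : 0 ≡ (B - 1) * l [MOD Nat.gcd A B] :=
      ((Nat.modEq_zero_iff_dvd).2 (hl.mul_left _)).symm
    obtain ⟨k, h1, h2⟩ := Nat.chineseRemainder' h
    refine ⟨k, (Nat.modEq_zero_iff_dvd).1 h1, ?_⟩
    rw [← Nat.modEq_zero_iff_dvd]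
    have h3 : (B - 1) * l + l = B * l := by
      obtain ⟨c, rfl⟩ : ∃ c, B = c + 1 := ⟨B - 1, by omega⟩
      simp; ring
    have := h2.add_right l
    rw [h3] at this
    exact this.trans ((Nat.modEq_zero_iff_dvd).2 (dvd_mul_right _ _))
  obtain ⟨v, hv1, hv2⟩ := hex
  have : ((Icc ⌈X⌉₊ ⌊X + Y⌋₊).filter fun n => A ∣ n ∧ B ∣ n + l)
      = (Icc ⌈X⌉₊ ⌊X + Y⌋₊).filter fun n => n ≡ v [MOD Nat.lcm A B] := by
    apply Finset.filter_congr
    intro n _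
    rw [← modEq_lcm_iff]
    apply and_congr
    · constructor
      · intro h
        exact ((Nat.modEq_zero_iff_dvd).2 h).trans ((Nat.modEq_zero_iff_dvd).2 hv1).symm
      · intro h
        exact (Nat.modEq_zero_iff_dvd).1 (h.trans ((Nat.modEq_zero_iff_dvd).2 hv1))
    · constructor
      · intro h
        exact Nat.ModEq.add_right_cancel' l
          (((Nat.modEq_zero_iff_dvd).2 h).trans ((Nat.modEq_zero_iff_dvd).2 hv2).symm)
      · intro h
        exact (Nat.modEq_zero_iff_dvd).1 ((h.add_right l).trans ((Nat.modEq_zero_iff_dvd).2 hv2))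
  rw [this]
  exact count_mod X Y hX hY _ v (Nat.lcm_pos hA hB)

end ShiuAux

namespace ShiuAux

lemma gcd_lcm_aux {a b u v : ℕ} (ha : 0 < a) (hub : u.Coprime b) (huv : u.Coprime v)
    (hva : v.Coprime a) :
    Nat.gcd (a * u) (b * v) = Nat.gcd a b ∧ Nat.lcm (a * u) (b * v) = Nat.lcm a b * (u * v) := by
  have h1 : Nat.gcd (a * u) (b * v) = Nat.gcd a b := by
    rw [Nat.Coprime.gcd_mul_right_cancel a (hub.mul_right huv),
      Nat.Coprime.gcd_mul_right_cancel_right b hva]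
  refine ⟨h1, ?_⟩
  have h2 := Nat.gcd_mul_lcm (a * u) (b * v)
  have h3 := Nat.gcd_mul_lcm a b
  rw [h1] at h2
  have hg : 0 < Nat.gcd a b := Nat.gcd_pos_of_pos_left _ ha
  apply Nat.eq_of_mul_eq_mul_left hg
  rw [h2, ← mul_assoc (Nat.gcd a b), h3]
  ring

lemma count_T (X Y : ℝ) (hX : 1 ≤ X) (hY : 0 ≤ Y) (a b l : ℕ) (ha : 0 < a) (hb : 0 < b)
    (hl : Nat.gcd a b ∣ l) (T : Finset ℕ)
    (hT : ∀ p ∈ T, p.Prime ∧ ¬ p ∣ a ∧ ¬ p ∣ b ∧ ¬ p ∣ l) :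
    |(#(((Icc ⌈X⌉₊ ⌊X + Y⌋₊).filter fun n => a ∣ n ∧ b ∣ n + l).filter
      fun n => ∀ p ∈ T, p ∣ n ∨ p ∣ n + l) : ℝ) - Y / (Nat.lcm a b) * hh T| ≤ 2 * 2 ^ #T := by
  set I := Icc ⌈X⌉₊ ⌊X + Y⌋₊
  set S := (I.filter fun n => a ∣ n ∧ b ∣ n + l).filter fun n => ∀ p ∈ T, p ∣ n ∨ p ∣ n + l
  have hcopA : ∀ c : ℕ, (∀ p ∈ T, ¬ p ∣ c) → ∀ U ⊆ T, Nat.Coprime (∏ p ∈ U, p) c := by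
    intro c hc U hU
    apply Nat.Coprime.prod_left
    intro p hp
    exact ((hT p (hU hp)).1.coprime_iff_not_dvd).2 (hc p (hU hp))
  have hmaps : ∀ n ∈ S, T.filter (· ∣ n) ∈ T.powerset := by
    intro n _; simp
  have h1 := Finset.card_eq_sum_card_fiberwise hmaps
  have hUV : ∀ U ⊆ T, Nat.Coprime (∏ p ∈ U, p) (∏ p ∈ T \ U, p) := by
    intro U hU
    apply Nat.Coprime.prod_left
    intro p hp
    apply Nat.Coprime.prod_right
    intro q hq
    rw [Nat.coprime_primes (hT p (hU hp)).1 (hT q (mem_sdiff.1 hq).1).1]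
    rintro rfl
    exact (mem_sdiff.1 hq).2 hp
  have h2 : ∀ U ∈ T.powerset, (S.filter fun n => T.filter (· ∣ n) = U)
      = I.filter fun n => (a * ∏ p ∈ U, p) ∣ n ∧ (b * ∏ p ∈ T \ U, p) ∣ n + l := by
    intro U hU
    rw [mem_powerset] at hU
    ext n
    simp only [S, mem_filter]
    constructor
    · rintro ⟨⟨⟨hnI, han, hbn⟩, hTn⟩, hUe⟩
      refine ⟨hnI, ?_, ?_⟩
      · apply Nat.Coprime.mul_dvd_of_dvd_of_dvd _ han
        · apply Finset.prod_primes_dvd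
          · intro p hp; exact (hT p (hU hp)).1.prime
          · intro p hp
            rw [← hUe] at hp
            exact (mem_filter.1 hp).2
        · exact (hcopA a (fun p hp => (hT p hp).2.1) U hU).symm
      · apply Nat.Coprime.mul_dvd_of_dvd_of_dvd _ hbn
        · apply Finset.prod_primes_dvd
          · intro p hp; exact (hT p (mem_sdiff.1 hp).1).1.prime
          · intro p hp
            obtain ⟨hp1, hp2⟩ := mem_sdiff.1 hp
            rcases hTn p hp1 with h | h
            · exact absurd (by rw [← hUe]; exact mem_filter.2 ⟨hp1, h⟩) hp2
            · exact h
        · exact (hcopA b (fun p hp => (hT p hp).2.2.1) _ sdiff_subset).symm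
    · rintro ⟨hnI, han, hbn⟩
      have hU1 : ∀ p ∈ U, p ∣ n := fun p hp =>
        (Finset.dvd_prod_of_mem _ hp).trans ((dvd_mul_left _ _).trans han)
      have hU2 : ∀ p ∈ T \ U, p ∣ n + l := fun p hp =>
        (Finset.dvd_prod_of_mem (fun p => p) hp).trans ((dvd_mul_left _ _).trans hbn)
      refine ⟨⟨⟨hnI, (dvd_mul_right _ _).trans han, (dvd_mul_right _ _).trans hbn⟩, ?_⟩, ?_⟩
      · intro p hp
        by_cases hpU : p ∈ U
        · exact Or.inl (hU1 p hpU)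
        · exact Or.inr (hU2 p (mem_sdiff.2 ⟨hp, hpU⟩))
      · ext p
        rw [mem_filter]
        constructor
        · rintro ⟨hp, hpn⟩
          by_contra hpU
          exact (hT p hp).2.2.2 ((Nat.dvd_add_right hpn).1 (hU2 p (mem_sdiff.2 ⟨hp, hpU⟩)))
        · intro hp; exact ⟨hU hp, hU1 p hp⟩
  have hpos : ∀ U ⊆ T, 0 < ∏ p ∈ U, p := fun U hU =>
    Finset.prod_pos fun p hp => (hT p (hU hp)).1.pos
  have h3 : ∀ U ∈ T.powerset, |(#(S.filter fun n => T.filter (· ∣ n) = U) : ℝ)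
      - Y / (Nat.lcm a b) / ∏ p ∈ T, (p:ℝ)| ≤ 2 := by
    intro U hU
    rw [h2 U hU]
    rw [mem_powerset] at hU
    obtain ⟨hg, hL⟩ := gcd_lcm_aux ha (hcopA b (fun p hp => (hT p hp).2.2.1) U hU) (hUV U hU)
      (hcopA a (fun p hp => (hT p hp).2.1) (T \ U) sdiff_subset)
    have := count_two X Y hX hY (a * ∏ p ∈ U, p) (b * ∏ p ∈ T \ U, p) l
      (Nat.mul_pos ha (hpos U hU)) (Nat.mul_pos hb (hpos _ sdiff_subset)) (by rw [hg]; exact hl)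
    rw [hL, mul_comm (∏ p ∈ U, p), Finset.prod_sdiff hU] at this
    push_cast at this
    rw [← div_div] at this
    exact this
  have h4 : Y / (Nat.lcm a b) * hh T
      = ∑ U ∈ T.powerset, Y / (Nat.lcm a b) / ∏ p ∈ T, (p:ℝ) := by
    rw [Finset.sum_const, card_powerset, hh, Finset.prod_div_distrib, Finset.prod_const,
      nsmul_eq_mul]
    push_cast
    ring
  rw [h1, h4]
  push_cast
  rw [← Finset.sum_sub_distrib]
  refine (Finset.abs_sum_le_sum_abs _ _).trans ((Finset.sum_le_sum h3).trans ?_)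
  rw [Finset.sum_const, card_powerset, nsmul_eq_mul]
  push_cast
  linarith

/-- primes below z -/
noncomputable def pr (z : ℝ) : Finset ℕ := (range ⌈z⌉₊).filter Nat.Prime

lemma mem_pr {z : ℝ} {p : ℕ} : p ∈ pr z ↔ p.Prime ∧ (p:ℝ) < z := by
  simp [pr, Nat.lt_ceil, and_comm]

/-- the sifted set -/
noncomputable def sift (X Y z : ℝ) (a b l : ℕ) : Finset ℕ :=
  (Icc ⌈X⌉₊ ⌊X + Y⌋₊).filter fun n => a ∣ n ∧ b ∣ n + l ∧
    ∀ p ∈ pr z, ¬ p ∣ n / a ∧ ¬ p ∣ (n + l) / b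

lemma sieve_bound (X Y z : ℝ) (hX : 1 ≤ X) (hz : 2 ≤ z) (a b l : ℕ) (ha : 0 < a) (hb : 0 < b)
    (hl : Nat.gcd a b ∣ l) (hzY : z ^ 360 * (Nat.lcm a b : ℝ) ≤ Y) :
    (#(sift X Y z a b l) : ℝ) ≤ 4 * (Y / Nat.lcm a b) *
      ∏ p ∈ (pr z).filter (fun p => 3 ≤ p ∧ ¬ p ∣ a ∧ ¬ p ∣ b ∧ ¬ p ∣ l), (1 - 2 / (p:ℝ)) := by
  set P := (pr z).filter (fun p => 3 ≤ p ∧ ¬ p ∣ a ∧ ¬ p ∣ b ∧ ¬ p ∣ l) with hPdef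
  have hPm : ∀ p ∈ P, (p.Prime ∧ (p:ℝ) < z) ∧ 3 ≤ p ∧ ¬ p ∣ a ∧ ¬ p ∣ b ∧ ¬ p ∣ l := by
    intro p hp
    rw [hPdef, mem_filter, mem_pr] at hp
    exact hp
  have hP : ∀ p ∈ P, p.Prime ∧ 3 ≤ p := fun p hp => ⟨(hPm p hp).1.1, (hPm p hp).2.1⟩
  have hPz : ∀ p ∈ P, (p:ℝ) ≤ z := fun p hp => (hPm p hp).1.2.le
  have hL : (0:ℝ) < Nat.lcm a b := by exact_mod_cast Nat.lcm_pos ha hb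
  have hY : 0 ≤ Y := le_trans (by positivity) hzY
  set S := (Icc ⌈X⌉₊ ⌊X + Y⌋₊).filter fun n => a ∣ n ∧ b ∣ n + l
  have hsel := selberg (P := P) (D := z ^ 55) hP (one_le_pow₀ (by linarith)) S
    (fun p n => p ∣ n ∨ p ∣ n + l) (Y / Nat.lcm a b) (fun T hT => count_T X Y hX hY a b l ha hb hl T
      (fun p hp => ⟨(hP p (hT hp)).1, (hPm p (hT hp)).2.2⟩))
  have hsub : sift X Y z a b l ⊆ S.filter fun n => ∀ p ∈ P, ¬ (p ∣ n ∨ p ∣ n + l) := by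
    intro n hn
    simp only [sift, mem_filter] at hn
    obtain ⟨hnI, han, hbn, hq⟩ := hn
    simp only [S, mem_filter]
    refine ⟨⟨hnI, han, hbn⟩, ?_⟩
    intro p hp
    obtain ⟨⟨hp1, hp2⟩, hp3, hp4, hp5, hp6⟩ := hPm p hp
    obtain ⟨h1, h2⟩ := hq p (mem_pr.2 ⟨hp1, hp2⟩)
    rintro (h | h)
    · rw [← Nat.mul_div_cancel' han, hp1.dvd_mul] at h
      tauto
    · rw [← Nat.mul_div_cancel' hbn, hp1.dvd_mul] at h
      tauto
  have hcard : (#(sift X Y z a b l) : ℝ) ≤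
      #(S.filter fun n => ∀ p ∈ P, ¬ (p ∣ n ∨ p ∣ n + l)) := by
    exact_mod_cast card_le_card hsub
  have hG := rankin_G z hz hP hPz
  have hlow := prod_lower z hz hP hPz
  set V := ∏ p ∈ P, (1 - 2 / (p:ℝ))
  have hYL : z ^ 360 ≤ Y / Nat.lcm a b := by rw [le_div_iff₀ hL]; exact hzY
  have hV : 0 < V := by
    by_contra h
    have : z ^ 30 * V ≤ 0 := mul_nonpos_of_nonneg_of_nonpos (by positivity) (by linarith)
    linarith
  have e1 : Y / Nat.lcm a b / GG P (z ^ 55) ≤ Y / Nat.lcm a b * (2 * V) := by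
    rw [div_eq_mul_one_div _ (GG P (z ^ 55))]
    apply mul_le_mul_of_nonneg_left hG (by positivity)
  have e2 : 2 * (z ^ 55) ^ 6 ≤ 2 * (Y / Nat.lcm a b) * V := by
    calc 2 * (z ^ 55) ^ 6 = 2 * z ^ 330 * 1 := by ring
      _ ≤ 2 * z ^ 330 * (z ^ 30 * V) := by gcongr
      _ = 2 * z ^ 360 * V := by ring
      _ ≤ _ := by gcongr
  linarith

end ShiuAux

namespace ShiuAux

noncomputable def psi (n : ℕ) : ℝ := ∏ p ∈ n.primeFactors, (1 + 6 / (p:ℝ))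
noncomputable def WW (z : ℝ) : ℝ := ∏ p ∈ pr z, (1 - 1 / (p:ℝ))

lemma psi_fac (p : ℕ) : (1:ℝ) ≤ 1 + 6 / (p:ℝ) := by
  have : (0:ℝ) ≤ 6 / (p:ℝ) := by positivity
  linarith

lemma psi_one_le (n : ℕ) : 1 ≤ psi n := by
  unfold psi
  exact Finset.one_le_prod fun p _ => psi_fac p

lemma psi_mono {m n : ℕ} (hn : n ≠ 0) (h : m ∣ n) : psi m ≤ psi n := by
  apply Finset.prod_le_prod_of_subset_of_one_le (Nat.primeFactors_mono h hn)
  · intro p _; exact le_trans zero_le_one (psi_fac p)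
  · intro p _ _; exact psi_fac p

lemma psi_mul {m n : ℕ} (h : m.Coprime n) : psi (m * n) = psi m * psi n := by
  unfold psi
  rw [h.primeFactors_mul, Finset.prod_union h.disjoint_primeFactors]

lemma psi_mul_le {m n : ℕ} (hm : m ≠ 0) (hn : n ≠ 0) : psi (m * n) ≤ psi m * psi n := by
  unfold psi
  rw [Nat.primeFactors_mul hm hn, ← Finset.prod_union_inter]
  refine le_mul_of_one_le_right ?_ (Finset.one_le_prod fun p _ => psi_fac p)
  exact Finset.prod_nonneg fun p _ => le_trans zero_le_one (psi_fac p)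

lemma psi_prime_pow {p k : ℕ} (hp : p.Prime) (hk : k ≠ 0) : psi (p ^ k) = 1 + 6 / (p:ℝ) := by
  unfold psi
  rw [Nat.primeFactors_prime_pow hk hp, Finset.prod_singleton]

lemma psi_prod_le (z : ℝ) (a : ℕ) (ha : a ≠ 0) :
    ∏ p ∈ pr z, (if p ∣ a then 1 + 6 / (p:ℝ) else 1) ≤ psi a := by
  rw [← Finset.prod_filter]
  apply Finset.prod_le_prod_of_subset_of_one_le
  · intro p hp
    rw [mem_filter, mem_pr] at hp
    exact Nat.mem_primeFactors.2 ⟨hp.1.1, hp.2, ha⟩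
  · intro p _; exact le_trans zero_le_one (psi_fac p)
  · intro p _ _; exact psi_fac p

lemma WW_pos (z : ℝ) : 0 < WW z := by
  apply Finset.prod_pos
  intro p hp
  have : (2:ℝ) ≤ p := by exact_mod_cast (mem_pr.1 hp).1.two_le
  have h2 : 1 / (p:ℝ) ≤ 1 / 2 := by gcongr
  linarith

lemma fac_bound (p : ℕ) (hp : p.Prime) (A B L : Prop) [Decidable A] [Decidable B] [Decidable L] :
    (if 3 ≤ p ∧ ¬ A ∧ ¬ B ∧ ¬ L then 1 - 2 / (p:ℝ) else 1) ≤
    (if p = 2 then 4 else 1) * (1 - 1 / (p:ℝ)) ^ 2 * (if A then 1 + 6 / (p:ℝ) else 1) *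
      (if B then 1 + 6 / (p:ℝ) else 1) * (if L then 1 + 6 / (p:ℝ) else 1) := by
  rcases eq_or_ne p 2 with rfl | hp2
  · simp only [if_true]
    rw [if_neg (by omega)]
    norm_num
    split_ifs <;> norm_num
  · have h3 : 3 ≤ p := by have := hp.two_le; omega
    have h3' : (3:ℝ) ≤ p := by exact_mod_cast h3
    rw [if_neg hp2]
    have hx : 0 < 1 / (p:ℝ) := by positivity
    have hx3 : 1 / (p:ℝ) ≤ 1 / 3 := by gcongr
    have e2 : 2 / (p:ℝ) = 2 * (1 / p) := by ring
    have e6 : 6 / (p:ℝ) = 6 * (1 / p) := by ring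
    rw [e2, e6]
    set x := 1 / (p:ℝ)
    have k1 : 1 ≤ (1 - x) ^ 2 * (1 + 6 * x) := by nlinarith [mul_pos hx hx, mul_pos hx (mul_pos hx hx)]
    have k2 : (1 - x) ^ 2 * (1 + 6 * x) ≤ (1 - x) ^ 2 * (1 + 6 * x) * (1 + 6 * x) := by
      apply le_mul_of_one_le_right <;> nlinarith
    have k3 : (1 - x) ^ 2 * (1 + 6 * x) * (1 + 6 * x)
        ≤ (1 - x) ^ 2 * (1 + 6 * x) * (1 + 6 * x) * (1 + 6 * x) := by
      apply le_mul_of_one_le_right <;> nlinarith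
    have k4 : 1 - 2 * x ≤ (1 - x) ^ 2 := by nlinarith
    by_cases hA : A <;> by_cases hB : B <;> by_cases hL : L <;> simp [hA, hB, hL, h3] <;> linarith

lemma sieve2 (X Y z : ℝ) (hX : 1 ≤ X) (hz : 2 ≤ z) (a b l : ℕ) (ha : 0 < a) (hb : 0 < b)
    (hl0 : 0 < l) (hl : Nat.gcd a b ∣ l) (hzY : z ^ 360 * (Nat.lcm a b : ℝ) ≤ Y) :
    (#(sift X Y z a b l) : ℝ) ≤ 16 * (Y / Nat.lcm a b) * WW z ^ 2 * psi a * psi b * psi l := by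
  refine (sieve_bound X Y z hX hz a b l ha hb hl hzY).trans ?_
  have hY : 0 ≤ Y := le_trans (by positivity) hzY
  have h1 : ∏ p ∈ (pr z).filter (fun p => 3 ≤ p ∧ ¬ p ∣ a ∧ ¬ p ∣ b ∧ ¬ p ∣ l), (1 - 2 / (p:ℝ))
      ≤ 4 * WW z ^ 2 * psi a * psi b * psi l := by
    rw [Finset.prod_filter]
    have h2 : ∏ p ∈ pr z, (if 3 ≤ p ∧ ¬ p ∣ a ∧ ¬ p ∣ b ∧ ¬ p ∣ l then 1 - 2 / (p:ℝ) else 1) ≤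
        ∏ p ∈ pr z, ((if p = 2 then 4 else 1) * (1 - 1 / (p:ℝ)) ^ 2 *
          (if p ∣ a then 1 + 6 / (p:ℝ) else 1) * (if p ∣ b then 1 + 6 / (p:ℝ) else 1) *
          (if p ∣ l then 1 + 6 / (p:ℝ) else 1)) := by
      apply Finset.prod_le_prod
      · intro p _
        split_ifs with h
        · have h3 : (3:ℝ) ≤ p := by exact_mod_cast h.1
          rw [sub_nonneg, div_le_one (by linarith)]
          linarith
        · norm_num
      · intro p hp
        exact fac_bound p (mem_pr.1 hp).1 _ _ _
    refine h2.trans ?_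
    simp only [Finset.prod_mul_distrib]
    have h4 : ∏ p ∈ pr z, (if p = 2 then (4:ℝ) else 1) ≤ 4 := by
      rw [Finset.prod_ite_eq']
      split_ifs <;> norm_num
    have h5 : ∏ p ∈ pr z, (1 - 1 / (p:ℝ)) ^ 2 = WW z ^ 2 := by
      rw [Finset.prod_pow]; rfl
    rw [h5]
    have n1 : ∀ c : ℕ, 0 ≤ ∏ p ∈ pr z, (if p ∣ c then 1 + 6 / (p:ℝ) else 1) := by
      intro c
      apply Finset.prod_nonneg
      intro p _
      split_ifs <;> positivity
    have n2 : ∀ c, 0 ≤ psi c := fun c => le_trans zero_le_one (psi_one_le c)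
    have := n2 a
    have := n2 b
    have := n2 l
    have := n1 a
    have := n1 b
    have := n1 l
    have m1 := psi_prod_le z a ha.ne'
    have m2 := psi_prod_le z b hb.ne'
    have m3 := psi_prod_le z l hl0.ne'
    gcongr
  calc _ ≤ 4 * (Y / Nat.lcm a b) * (4 * WW z ^ 2 * psi a * psi b * psi l) := by gcongr
    _ = _ := by ring

lemma sum_psi (N : ℕ) : ∑ k ∈ Icc 1 N, psi k ≤ Real.exp 6 * N := by
  set P := (Icc 2 N).filter Nat.Prime
  have h1 : ∀ k ∈ Icc 1 N, psi k
      = ∑ T ∈ P.powerset, if (∏ p ∈ T, p) ∣ k then ∏ p ∈ T, (6 / (p:ℝ)) else 0 := by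
    intro k hk
    rw [mem_Icc] at hk
    unfold psi
    rw [Finset.prod_one_add, ← Finset.sum_filter]
    apply Finset.sum_congr _ (fun _ _ => rfl)
    ext T
    simp only [mem_powerset, mem_filter]
    constructor
    · intro hT
      refine ⟨?_, ?_⟩
      · intro p hp
        have := Nat.mem_primeFactors.1 (hT hp)
        simp only [P, mem_filter, mem_Icc]
        exact ⟨⟨this.1.two_le, (Nat.le_of_dvd (by omega) this.2.1).trans hk.2⟩, this.1⟩
      · apply Finset.prod_primes_dvd
        · intro p hp; exact (Nat.mem_primeFactors.1 (hT hp)).1.prime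
        · intro p hp; exact (Nat.mem_primeFactors.1 (hT hp)).2.1
    · rintro ⟨hT, hd⟩ p hp
      have hp1 := hT hp
      simp only [P, mem_filter, mem_Icc] at hp1
      exact Nat.mem_primeFactors.2 ⟨hp1.2, (Finset.dvd_prod_of_mem _ hp).trans hd, by omega⟩
  rw [Finset.sum_congr rfl h1, Finset.sum_comm]
  have h2 : ∀ T ∈ P.powerset,
      (∑ k ∈ Icc 1 N, if (∏ p ∈ T, p) ∣ k then ∏ p ∈ T, (6 / (p:ℝ)) else 0)
      ≤ N * ∏ p ∈ T, (6 / (p:ℝ) ^ 2) := by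
    intro T hT
    rw [mem_powerset] at hT
    rw [← Finset.sum_filter, Finset.sum_const, nsmul_eq_mul]
    have hc : #((Icc 1 N).filter fun k => (∏ p ∈ T, p) ∣ k) = N / ∏ p ∈ T, p := by
      rw [← Nat.Ioc_filter_dvd_card_eq_div]
      rfl
    rw [hc]
    have e : ∏ p ∈ T, (6 / (p:ℝ) ^ 2) = (∏ p ∈ T, (6 / (p:ℝ))) / ∏ p ∈ T, (p:ℝ) := by
      rw [← Finset.prod_div_distrib]
      apply Finset.prod_congr rfl
      intro p _
      rw [div_div, sq]
    rw [e, ← mul_div_assoc, mul_div_right_comm]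
    apply mul_le_mul_of_nonneg_right _ (Finset.prod_nonneg fun p _ => by positivity)
    have := @Nat.cast_div_le ℝ _ _ _ N (∏ p ∈ T, p)
    push_cast at this
    exact this
  refine (Finset.sum_le_sum h2).trans ?_
  rw [← Finset.mul_sum, ← Finset.prod_one_add, mul_comm]
  apply mul_le_mul_of_nonneg_right _ (by positivity)
  calc ∏ p ∈ P, (1 + 6 / (p:ℝ) ^ 2) ≤ ∏ p ∈ P, Real.exp (6 / (p:ℝ) ^ 2) := by
        apply Finset.prod_le_prod
        · intros; positivity
        · intro p _
          have := Real.add_one_le_exp (6 / (p:ℝ) ^ 2)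
          linarith
    _ = Real.exp (∑ p ∈ P, 6 / (p:ℝ) ^ 2) := (Real.exp_sum _ _).symm
    _ ≤ Real.exp 6 := by
        apply Real.exp_le_exp.2
        rcases Nat.eq_zero_or_pos N with h0 | h0
        · have : P = ∅ := by simp [P, h0]
          rw [this]; simp
        have h3 := sum_Ioc_inv_sq_le_sub (α := ℝ) one_ne_zero (show 1 ≤ N from h0)
        have h4 : ∑ p ∈ P, 6 / (p:ℝ) ^ 2 ≤ ∑ p ∈ Ioc 1 N, 6 / (p:ℝ) ^ 2 := by
          apply Finset.sum_le_sum_of_subset_of_nonneg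
          · intro p hp
            simp only [P, mem_filter, mem_Icc] at hp
            rw [mem_Ioc]; omega
          · intros; positivity
        have h5 : ∑ p ∈ Ioc 1 N, 6 / (p:ℝ) ^ 2 = 6 * ∑ p ∈ Ioc 1 N, ((p:ℝ) ^ 2)⁻¹ := by
          rw [Finset.mul_sum]; rfl
        have h6 : (0:ℝ) ≤ (N:ℝ)⁻¹ := by positivity
        rw [h5] at h4
        push_cast at h3
        linarith

lemma sum_psi_dvd (H : ℝ) (hH : 0 ≤ H) (d : ℕ) (hd : 0 < d) :
    ∑ l ∈ (Icc 1 ⌊H⌋₊).filter (d ∣ ·), psi l ≤ Real.exp 6 * psi d * (H / d) := by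
  have himg : (Icc 1 ⌊H⌋₊).filter (d ∣ ·) = (Icc 1 (⌊H⌋₊ / d)).image (d * ·) := by
    ext l
    simp only [mem_filter, mem_Icc, mem_image]
    constructor
    · rintro ⟨⟨h1, h2⟩, k, rfl⟩
      refine ⟨k, ⟨Nat.pos_of_mul_pos_left (by omega : 0 < d * k), ?_⟩, rfl⟩
      rw [Nat.le_div_iff_mul_le hd, mul_comm]; exact h2
    · rintro ⟨k, ⟨h1, h2⟩, rfl⟩
      rw [Nat.le_div_iff_mul_le hd, mul_comm] at h2
      exact ⟨⟨Nat.mul_pos hd h1, h2⟩, dvd_mul_right _ _⟩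
  rw [himg, Finset.sum_image (by
    intro x _ y _ h
    exact Nat.eq_of_mul_eq_mul_left hd h)]
  have hpd : 0 ≤ psi d := le_trans zero_le_one (psi_one_le d)
  calc ∑ k ∈ Icc 1 (⌊H⌋₊ / d), psi (d * k) ≤ ∑ k ∈ Icc 1 (⌊H⌋₊ / d), psi d * psi k := by
        apply Finset.sum_le_sum
        intro k hk
        rw [mem_Icc] at hk
        exact psi_mul_le hd.ne' (by omega)
    _ = psi d * ∑ k ∈ Icc 1 (⌊H⌋₊ / d), psi k := by rw [Finset.mul_sum]
    _ ≤ psi d * (Real.exp 6 * (⌊H⌋₊ / d : ℕ)) := by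
        apply mul_le_mul_of_nonneg_left (sum_psi _) hpd
    _ ≤ psi d * (Real.exp 6 * (H / d)) := by
        gcongr
        refine Nat.cast_div_le.trans ?_
        gcongr
        exact Nat.floor_le hH
    _ = _ := by ring

lemma sieve_l (X Y H z : ℝ) (hX : 1 ≤ X) (hz : 2 ≤ z) (hH : 0 ≤ H) (a b : ℕ) (ha : 0 < a)
    (hb : 0 < b) (hzY : z ^ 360 * ((a:ℝ) * b) ≤ Y) :
    ∑ l ∈ Icc 1 ⌊H⌋₊, (#(sift X Y z a b l) : ℝ) ≤
      16 * Real.exp 6 * H * Y * WW z ^ 2 * (psi a ^ 2 / a) * (psi b ^ 2 / b) := by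
  have hY : 0 ≤ Y := le_trans (by positivity) hzY
  set d := Nat.gcd a b
  have hd : 0 < d := Nat.gcd_pos_of_pos_left _ ha
  have hL : 0 < Nat.lcm a b := Nat.lcm_pos ha hb
  have hmul : (d:ℝ) * (Nat.lcm a b) = a * b := by exact_mod_cast Nat.gcd_mul_lcm a b
  have hd1 : (1:ℝ) ≤ d := by exact_mod_cast hd
  have hL0 : (0:ℝ) < Nat.lcm a b := by exact_mod_cast hL
  have ha0 : (0:ℝ) < a := by exact_mod_cast ha
  have hb0 : (0:ℝ) < b := by exact_mod_cast hb
  have hzY' : z ^ 360 * (Nat.lcm a b : ℝ) ≤ Y := by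
    refine le_trans ?_ hzY
    apply mul_le_mul_of_nonneg_left _ (by positivity)
    rw [← hmul]
    nlinarith
  have hpa := psi_one_le a
  have hpb := psi_one_le b
  set K := 16 * (Y / Nat.lcm a b) * WW z ^ 2 * psi a * psi b with hK
  have hK0 : 0 ≤ K := by positivity
  have h1 : ∑ l ∈ Icc 1 ⌊H⌋₊, (#(sift X Y z a b l) : ℝ) ≤
      ∑ l ∈ (Icc 1 ⌊H⌋₊).filter (d ∣ ·), K * psi l := by
    rw [Finset.sum_filter]
    apply Finset.sum_le_sum
    intro l hl
    rw [mem_Icc] at hl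
    split_ifs with h
    · exact sieve2 X Y z hX hz a b l ha hb hl.1 h hzY'
    · have : sift X Y z a b l = ∅ := by
        apply Finset.filter_eq_empty_iff.2
        rintro n _ ⟨h1, h2, _⟩
        apply h
        exact (Nat.dvd_add_right ((Nat.gcd_dvd_left a b).trans h1)).1
          ((Nat.gcd_dvd_right a b).trans h2)
      rw [this]; simp
  refine h1.trans ?_
  rw [← Finset.mul_sum]
  have hpd : psi d ≤ psi a * psi b :=
    (psi_mono ha.ne' (Nat.gcd_dvd_left a b)).trans (le_mul_of_one_le_right (by linarith) hpb)
  calc K * ∑ l ∈ (Icc 1 ⌊H⌋₊).filter (d ∣ ·), psi l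
      ≤ K * (Real.exp 6 * (psi a * psi b) * (H / d)) := by
        apply mul_le_mul_of_nonneg_left _ hK0
        refine (sum_psi_dvd H hH d hd).trans ?_
        gcongr
    _ = 16 * Real.exp 6 * H * Y * WW z ^ 2 * (psi a ^ 2 * psi b ^ 2) * (1 / (d * Nat.lcm a b)) := by
        rw [hK]; field_simp
    _ = _ := by rw [hmul]; field_simp

end ShiuAux

namespace ShiuAux

structure Hyp (α β θ : ℝ) (g : ℕ → ℝ) : Prop where
  one : g 1 = 1
  mul : ∀ m n : ℕ, Nat.Coprime m n → g (m * n) = g m * g n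
  nn : ∀ n, 0 ≤ g n
  pow : ∀ p : ℕ, p.Prime → ∀ v : ℕ, 1 ≤ v → g (p ^ v) ≤ α ^ v
  bd : ∀ n : ℕ, 1 ≤ n → g n ≤ β * (n:ℝ) ^ θ

noncomputable def FF (g : ℕ → ℝ) (σ : ℝ) (a : ℕ) : ℝ := g a * (psi a ^ 2 / a) * (a:ℝ) ^ σ

lemma psi_one : psi 1 = 1 := by simp [psi]

lemma FF_nn {α β θ : ℝ} {g : ℕ → ℝ} (hg : Hyp α β θ g) (σ : ℝ) (a : ℕ) : 0 ≤ FF g σ a := by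
  have := hg.nn a
  unfold FF
  positivity

lemma x_bound {p : ℕ} (hp : p.Prime) : (p:ℝ) ^ (-(3/4) : ℝ) ≤ 2 / 3 := by
  have h2 : (2:ℝ) ≤ p := by exact_mod_cast hp.two_le
  rw [Real.rpow_neg (by linarith), inv_le_comm₀ (by positivity) (by norm_num)]
  have h3 : (3/2:ℝ) = ((3/2:ℝ)^(4/3:ℝ)) ^ (3/4:ℝ) := by
    rw [← Real.rpow_mul (by norm_num)]; norm_num
  have h4 : ((3/2:ℝ)^(4/3:ℝ)) ≤ 2 := by
    have : ((3/2:ℝ)^(4/3:ℝ)) ^ (3:ℕ) ≤ 2 ^ 3 := by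
      rw [← Real.rpow_natCast, ← Real.rpow_mul (by norm_num)]
      norm_num
    exact le_of_pow_le_pow_left₀ (by norm_num) (by norm_num) this
  rw [show ((2:ℝ)/3)⁻¹ = 3/2 by norm_num, h3]
  exact Real.rpow_le_rpow (by positivity) (h4.trans h2) (by norm_num)

lemma FF_pow_le {α β θ : ℝ} {g : ℕ → ℝ} (hβ : 1 ≤ β) (hθ : θ ≤ 1 / 1000) (hg : Hyp α β θ g)
    {σ : ℝ} (hσ : σ ≤ 1 / 10) {p : ℕ} (hp : p.Prime) (v : ℕ) :
    FF g σ (p ^ v) ≤ 16 * β * ((p:ℝ) ^ (-(3/4) : ℝ)) ^ v := by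
  have h2 : (2:ℝ) ≤ p := by exact_mod_cast hp.two_le
  have hpsi : psi (p ^ v) ^ 2 ≤ 16 := by
    rcases eq_or_ne v 0 with rfl | hv
    · simp [psi_one]
    · rw [psi_prime_pow hp hv]
      have h3 : 6 / (p:ℝ) ≤ 3 := by rw [div_le_iff₀ (by linarith)]; linarith
      have h4 : 0 ≤ 6 / (p:ℝ) := by positivity
      nlinarith
  have hn1 : 1 ≤ p ^ v := Nat.one_le_pow _ _ hp.pos
  have hbd := hg.bd (p ^ v) hn1
  have hnr : (1:ℝ) ≤ ((p ^ v : ℕ) : ℝ) := by exact_mod_cast hn1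
  set n : ℕ := p ^ v with hn
  have h0 : (0:ℝ) < n := by linarith
  have hx : ((p:ℝ) ^ (-(3/4) : ℝ)) ^ v = (n:ℝ) ^ (-(3/4) : ℝ) := by
    rw [hn]; push_cast
    rw [← Real.rpow_natCast, ← Real.rpow_mul (by positivity), ← Real.rpow_natCast,
      ← Real.rpow_mul (by positivity), mul_comm]
  rw [hx]
  unfold FF
  calc g n * (psi n ^ 2 / n) * (n:ℝ) ^ σ ≤ (β * (n:ℝ) ^ θ) * (16 / n) * (n:ℝ) ^ σ := by gcongr
    _ = 16 * β * ((n:ℝ) ^ θ * (n:ℝ) ^ (-1:ℝ) * (n:ℝ) ^ σ) := by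
        rw [Real.rpow_neg_one]; ring
    _ = 16 * β * (n:ℝ) ^ (θ + (-1) + σ) := by rw [Real.rpow_add h0, Real.rpow_add h0]
    _ ≤ _ := by
        apply mul_le_mul_of_nonneg_left _ (by positivity)
        exact Real.rpow_le_rpow_of_exponent_le hnr (by linarith)

lemma FF_summable {α β θ : ℝ} {g : ℕ → ℝ} (hβ : 1 ≤ β) (hθ : θ ≤ 1 / 1000) (hg : Hyp α β θ g)
    {σ : ℝ} (hσ : σ ≤ 1 / 10) {p : ℕ} (hp : p.Prime) : Summable fun v : ℕ => FF g σ (p ^ v) := by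
  refine Summable.of_nonneg_of_le (fun v => FF_nn hg σ _) (fun v => FF_pow_le hβ hθ hg hσ hp v) ?_
  apply Summable.mul_left
  apply summable_geometric_of_lt_one (by positivity)
  linarith [x_bound hp]

lemma FF_local {α β θ : ℝ} {g : ℕ → ℝ} (hα : 1 ≤ α) (hβ : 1 ≤ β) (hθ : θ ≤ 1 / 1000)
    (hg : Hyp α β θ g) {σ : ℝ} (hσ0 : 0 ≤ σ) (hσ : σ ≤ 1 / 10) {p : ℕ} (hp : p.Prime) :
    ∑' v : ℕ, FF g σ (p ^ v) ≤ 1 + g p / p +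
      ((48 * β + 30 * α) * (p:ℝ) ^ (-(3/2) : ℝ) + α * (((p:ℝ) ^ σ - 1) / p)) := by
  have h2 : (2:ℝ) ≤ p := by exact_mod_cast hp.two_le
  have hp0 : (0:ℝ) < p := by linarith
  have hs := FF_summable hβ hθ hg hσ hp
  rw [← hs.sum_add_tsum_nat_add 2, Finset.sum_range_succ, Finset.sum_range_succ,
    Finset.sum_range_zero]
  have e0 : FF g σ (p ^ 0) = 1 := by simp [FF, psi_one, hg.one]
  have hgp : g p ≤ α := by simpa using hg.pow p hp 1 le_rfl
  have hgn := hg.nn p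
  have hps : 1 ≤ (p:ℝ) ^ σ := Real.one_le_rpow (by linarith) hσ0
  have e1 : FF g σ (p ^ 1) ≤ g p / p + (30 * α * (p:ℝ) ^ (-(3/2) : ℝ) + α * (((p:ℝ) ^ σ - 1) / p)) := by
    unfold FF
    rw [psi_prime_pow hp one_ne_zero, pow_one]
    have k1 : (1 + 6 / (p:ℝ)) ^ 2 ≤ 1 + 30 / p := by
      have : 6 / (p:ℝ) = 6 * (1 / p) := by ring
      have h30 : 30 / (p:ℝ) = 30 * (1 / p) := by ring
      rw [this, h30]
      have a1 : 1 / (p:ℝ) ≤ 1 / 2 := by gcongr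
      have a0 : 0 < 1 / (p:ℝ) := by positivity
      nlinarith
    have k2 : (p:ℝ) ^ σ / p / p ≤ (p:ℝ) ^ (-(3/2) : ℝ) := by
      have : (p:ℝ) ^ σ / p / p = (p:ℝ) ^ (σ - 2) := by
        rw [Real.rpow_sub hp0, div_div]
        norm_num [sq]
      rw [this]
      exact Real.rpow_le_rpow_of_exponent_le (by linarith) (by linarith)
    calc g p * ((1 + 6 / (p:ℝ)) ^ 2 / p) * (p:ℝ) ^ σ
        ≤ g p * ((1 + 30 / p) / p) * (p:ℝ) ^ σ := by gcongr
      _ = g p / p + (30 * g p * ((p:ℝ) ^ σ / p / p) + g p * (((p:ℝ) ^ σ - 1) / p)) := by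
          field_simp; ring
      _ ≤ _ := by
          have : 0 ≤ ((p:ℝ) ^ σ - 1) / p := div_nonneg (by linarith) hp0.le
          gcongr
  have hx := x_bound hp
  set x := (p:ℝ) ^ (-(3/4) : ℝ) with hxd
  have hx0 : 0 < x := by positivity
  have hx2 : x ^ 2 = (p:ℝ) ^ (-(3/2) : ℝ) := by
    rw [hxd, ← Real.rpow_natCast, ← Real.rpow_mul hp0.le]; norm_num
  have hgeo := (hasSum_geometric_of_lt_one hx0.le (by linarith : x < 1)).mul_left (16 * β * x ^ 2)
  have e2 : ∑' v : ℕ, FF g σ (p ^ (v + 2)) ≤ 48 * β * x ^ 2 := by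
    have hle : ∑' v : ℕ, FF g σ (p ^ (v + 2)) ≤ 16 * β * x ^ 2 * (1 - x)⁻¹ := by
      rw [← hgeo.tsum_eq]
      apply Summable.tsum_le_tsum _ ((summable_nat_add_iff 2).2 hs) hgeo.summable
      intro v
      refine (FF_pow_le hβ hθ hg hσ hp (v + 2)).trans (le_of_eq ?_)
      rw [← hxd]; ring
    have : (1 - x)⁻¹ ≤ 3 := by
      rw [inv_le_comm₀ (by linarith) (by norm_num)]; linarith
    calc _ ≤ _ := hle
      _ ≤ 16 * β * x ^ 2 * 3 := by gcongr
      _ = _ := by ring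
  rw [hx2] at e2
  rw [e0]
  linarith

noncomputable def etaf (α β σ : ℝ) (p : ℕ) : ℝ :=
  (48 * β + 30 * α) * (p:ℝ) ^ (-(3/2) : ℝ) + α * (((p:ℝ) ^ σ - 1) / p)

lemma FF_sum {α β θ : ℝ} {g : ℕ → ℝ} (hα : 1 ≤ α) (hβ : 1 ≤ β) (hθ : θ ≤ 1 / 1000)
    (hg : Hyp α β θ g) {σ : ℝ} (hσ0 : 0 ≤ σ) (hσ : σ ≤ 1 / 10) (y : ℝ) (A : Finset ℕ)
    (hA : ∀ a ∈ A, a ≠ 0 ∧ ∀ p, p.Prime → p ∣ a → (p:ℝ) < y) :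
    ∑ a ∈ A, FF g σ a ≤ ∏ p ∈ pr y, (1 + g p / p + etaf α β σ p) := by
  have hmul : ∀ {m n : ℕ}, Nat.Coprime m n → FF g σ (m * n) = FF g σ m * FF g σ n := by
    intro m n h
    unfold FF
    rw [hg.mul m n h, psi_mul h]
    push_cast
    rw [Real.mul_rpow (by positivity) (by positivity), mul_pow, mul_div_mul_comm]
    ring
  have h := EulerProduct.summable_and_hasSum_smoothNumbers_prod_primesBelow_tsum (f := FF g σ)
    (by simp [FF, psi_one, hg.one]) hmul (fun {p} hp => (FF_summable hβ hθ hg hσ hp).norm) ⌈y⌉₊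
  have hmem : ∀ a ∈ A, a ∈ Nat.smoothNumbers ⌈y⌉₊ := by
    intro a ha
    rw [Nat.mem_smoothNumbers']
    intro p hp hpa
    exact Nat.lt_ceil.2 ((hA a ha).2 p hp hpa)
  calc ∑ a ∈ A, FF g σ a = ∑ a ∈ A.subtype (· ∈ Nat.smoothNumbers ⌈y⌉₊), FF g σ a := by
        rw [Finset.sum_subtype_of_mem (FF g σ) hmem]
    _ ≤ ∏ p ∈ Nat.primesBelow ⌈y⌉₊, ∑' n : ℕ, FF g σ (p ^ n) :=
        sum_le_hasSum _ (fun a _ => FF_nn hg σ a) h.2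
    _ ≤ _ := by
        apply Finset.prod_le_prod
        · intro p _; exact tsum_nonneg fun v => FF_nn hg σ _
        · intro p hp
          exact FF_local hα hβ hθ hg hσ0 hσ (mem_pr.1 hp).1

end ShiuAux

namespace ShiuAux

noncomputable def PP (g : ℕ → ℝ) (X : ℝ) : ℝ :=
  ∏ p ∈ (Finset.Icc 1 ⌊X⌋₊).filter Nat.Prime, (1 + (g p - 1) / (p : ℝ))

noncomputable def Ceta (α β K : ℝ) : ℝ :=
  (48 * β + 30 * α) * (∑' n : ℕ, (n:ℝ) ^ (-(3/2) : ℝ)) + 3 * α * K * Real.exp K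

lemma etaf_nn {α β σ : ℝ} (hα : 1 ≤ α) (hβ : 1 ≤ β) (hσ : 0 ≤ σ) {p : ℕ} (hp : p.Prime) :
    0 ≤ etaf α β σ p := by
  have h2 : (1:ℝ) ≤ p := by exact_mod_cast hp.one_lt.le
  have : 1 ≤ (p:ℝ) ^ σ := Real.one_le_rpow h2 hσ
  have : 0 ≤ ((p:ℝ) ^ σ - 1) / p := div_nonneg (by linarith) (by linarith)
  unfold etaf
  positivity

lemma eta_sum {α β K y : ℝ} (hα : 1 ≤ α) (hβ : 1 ≤ β) (hK : 0 ≤ K) (hy : 2 ≤ y) :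
    ∑ p ∈ pr y, etaf α β (K / Real.log y) p ≤ Ceta α β K := by
  have hly : 0 < Real.log y := Real.log_pos (by linarith)
  unfold etaf Ceta
  rw [Finset.sum_add_distrib, ← Finset.mul_sum, ← Finset.mul_sum]
  have hs : Summable fun n : ℕ => (n:ℝ) ^ (-(3/2) : ℝ) := Real.summable_nat_rpow.2 (by norm_num)
  have h1 : ∑ p ∈ pr y, (p:ℝ) ^ (-(3/2) : ℝ) ≤ ∑' n : ℕ, (n:ℝ) ^ (-(3/2) : ℝ) :=
    hs.sum_le_tsum _ (fun n _ => by positivity)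
  have h2 : ∑ p ∈ pr y, ((p:ℝ) ^ (K / Real.log y) - 1) / p ≤ 3 * K * Real.exp K := by
    have h3 : ∀ p ∈ pr y, ((p:ℝ) ^ (K / Real.log y) - 1) / p
        ≤ (K / Real.log y * Real.exp K) * (Real.log p / p) := by
      intro p hp
      rw [mem_pr] at hp
      have hp1 : (1:ℝ) < p := by exact_mod_cast hp.1.one_lt
      rw [← mul_div_assoc]
      apply div_le_div_of_nonneg_right _ (by linarith)
      have hlp : 0 < Real.log p := Real.log_pos hp1
      have hlpy : Real.log p ≤ Real.log y := Real.log_le_log (by linarith) hp.2.le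
      rw [Real.rpow_def_of_pos (by linarith)]
      set t := Real.log p * (K / Real.log y) with ht
      have ht0 : 0 ≤ t := by positivity
      have htK : t ≤ K := by
        rw [ht, ← mul_div_assoc, div_le_iff₀ hly]; nlinarith
      have k1 : Real.exp t - 1 ≤ t * Real.exp t := by
        have := Real.add_one_le_exp (-t)
        have h5 : Real.exp (-t) * Real.exp t = 1 := by rw [← Real.exp_add]; simp
        nlinarith [Real.exp_pos t]
      have k2 : Real.exp t ≤ Real.exp K := Real.exp_le_exp.2 htK
      calc Real.exp t - 1 ≤ t * Real.exp t := k1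
        _ ≤ t * Real.exp K := by gcongr
        _ = _ := by rw [ht]; ring
    refine (Finset.sum_le_sum h3).trans ?_
    rw [← Finset.mul_sum]
    have hm := mertens y hy (pr y) (fun p hp => ⟨(mem_pr.1 hp).1, (mem_pr.1 hp).2.le⟩)
    calc _ ≤ (K / Real.log y * Real.exp K) * (3 * Real.log y) := by gcongr
      _ = _ := by field_simp
  have h3 : α * ∑ p ∈ pr y, ((p:ℝ) ^ (K / Real.log y) - 1) / p ≤ α * (3 * K * Real.exp K) := by
    gcongr
  have h4 : (48 * β + 30 * α) * ∑ p ∈ pr y, (p:ℝ) ^ (-(3/2) : ℝ) ≤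
    (48 * β + 30 * α) * (∑' n : ℕ, (n:ℝ) ^ (-(3/2) : ℝ)) := by gcongr
  linarith

lemma fac_half {g : ℕ → ℝ} (hg : ∀ n, 0 ≤ g n) {p : ℕ} (hp : p.Prime) :
    1 / 2 ≤ 1 + (g p - 1) / (p:ℝ) := by
  have h2 : (2:ℝ) ≤ p := by exact_mod_cast hp.two_le
  have h3 : 1 / (p:ℝ) ≤ 1 / 2 := by gcongr
  have h4 : 0 ≤ g p / p := div_nonneg (hg p) (by linarith)
  rw [sub_div]
  linarith

lemma PP_pos {g : ℕ → ℝ} (hg : ∀ n, 0 ≤ g n) (X : ℝ) : 0 < PP g X := by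
  apply Finset.prod_pos
  intro p hp
  have := fac_half hg (mem_filter.1 hp).2
  linarith

lemma euler_cmp {g η : ℕ → ℝ} (hg : ∀ n, 0 ≤ g n) (hη : ∀ p : ℕ, p.Prime → 0 ≤ η p) (X y z : ℝ)
    (hz : 1 < z) (hzy : z ≤ y) (hyX : y ≤ X) (hX : 2 ≤ X) :
    WW z * ∏ p ∈ pr y, (1 + g p / p + η p) ≤
      Real.exp (2 * (∑ p ∈ pr y, η p) + 6 * Real.log X / Real.log z) * PP g X := by
  set Q := (Finset.Icc 1 ⌊X⌋₊).filter Nat.Prime with hQ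
  have hQm : ∀ p, p ∈ Q ↔ p.Prime ∧ (p:ℝ) ≤ X := by
    intro p
    rw [hQ, mem_filter, mem_Icc, Nat.le_floor_iff (by linarith)]
    constructor
    · rintro ⟨⟨_, h⟩, h'⟩; exact ⟨h', h⟩
    · rintro ⟨h, h'⟩; exact ⟨⟨h.one_lt.le, h'⟩, h⟩
  have hpr : ∀ w ≤ X, pr w = Q.filter fun p : ℕ => (p:ℝ) < w := by
    intro w hw
    ext p
    rw [mem_pr, mem_filter, hQm]
    constructor
    · rintro ⟨h, h'⟩; exact ⟨⟨h, by linarith⟩, h'⟩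
    · rintro ⟨⟨h, _⟩, h'⟩; exact ⟨h, h'⟩
  have hm := mertens_inv z X hz hX (Q.filter fun p => z ≤ (p:ℝ)) (by
    intro p hp
    rw [mem_filter, hQm] at hp
    exact ⟨hp.1.1, hp.2, hp.1.2⟩)
  have e1 : WW z = ∏ p ∈ Q, if (p:ℝ) < z then 1 - 1 / (p:ℝ) else 1 := by
    rw [← Finset.prod_filter, WW, hpr z (hzy.trans hyX)]
  have e2 : ∏ p ∈ pr y, (1 + g p / p + η p)
      = ∏ p ∈ Q, if (p:ℝ) < y then (1 + g p / p + η p) else 1 := by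
    rw [← Finset.prod_filter, hpr y hyX]
  have e3 : ∑ p ∈ pr y, η p = ∑ p ∈ Q, if (p:ℝ) < y then η p else 0 := by
    rw [← Finset.sum_filter, hpr y hyX]
  rw [e1, e2, ← Finset.prod_mul_distrib]
  have hfac : ∀ p ∈ Q, (if (p:ℝ) < z then 1 - 1 / (p:ℝ) else 1) *
      (if (p:ℝ) < y then (1 + g p / p + η p) else 1) ≤
      Real.exp (2 * (if (p:ℝ) < y then η p else 0) + 2 * (if z ≤ (p:ℝ) then 1 / (p:ℝ) else 0)) *
        (1 + (g p - 1) / (p:ℝ)) := by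
    intro p hp
    rw [hQm] at hp
    have h2 : (2:ℝ) ≤ p := by exact_mod_cast hp.1.two_le
    have hh := fac_half hg hp.1
    have hgp : 0 ≤ g p / p := div_nonneg (hg p) (by linarith)
    have hη0 := hη p hp.1
    have e4 : (g p - 1) / (p:ℝ) = g p / p - 1 / p := by ring
    rw [e4] at hh ⊢
    set x := 1 / (p:ℝ)
    have hx0 : 0 ≤ x := by positivity
    have hx2 : x ≤ 1 / 2 := by simp only [x]; gcongr
    set G := g p / (p:ℝ)
    set e := 2 * (if (p:ℝ) < y then η p else 0) + 2 * (if z ≤ (p:ℝ) then x else 0) with he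
    have hexp := Real.add_one_le_exp e
    have hmain : (if (p:ℝ) < z then 1 - x else 1) * (if (p:ℝ) < y then (1 + G + η p) else 1)
        ≤ (e + 1) * (1 + (G - x)) := by
      by_cases c1 : (p:ℝ) < z
      · have c2 : (p:ℝ) < y := by linarith
        have c3 : ¬ z ≤ (p:ℝ) := by linarith
        rw [he]
        simp only [c1, c2, c3, if_true, if_false]
        nlinarith [mul_nonneg hη0 hx0, mul_nonneg hgp hx0,
          mul_nonneg hη0 (by linarith : 0 ≤ 1 + (G - x) - 1/2)]
      · have c3 : z ≤ (p:ℝ) := by linarith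
        by_cases c2 : (p:ℝ) < y
        · rw [he]
          simp only [c1, c2, c3, if_true, if_false]
          nlinarith [mul_nonneg hη0 (by linarith : 0 ≤ 1 + (G - x) - 1/2),
            mul_nonneg hx0 (by linarith : 0 ≤ 1 + (G - x) - 1/2)]
        · rw [he]
          simp only [c1, c2, c3, if_true, if_false]
          nlinarith [mul_nonneg hx0 (by linarith : 0 ≤ 1 + (G - x) - 1/2)]
    refine hmain.trans ?_
    apply mul_le_mul_of_nonneg_right hexp (by linarith)
  have hnn : ∀ p ∈ Q, 0 ≤ (if (p:ℝ) < z then 1 - 1 / (p:ℝ) else 1) *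
      (if (p:ℝ) < y then (1 + g p / p + η p) else 1) := by
    intro p hp
    rw [hQm] at hp
    have h2 : (2:ℝ) ≤ p := by exact_mod_cast hp.1.two_le
    have hgp : 0 ≤ g p / p := div_nonneg (hg p) (by linarith)
    have hη0 := hη p hp.1
    have hx2 : 1 / (p:ℝ) ≤ 1 / 2 := by gcongr
    apply mul_nonneg
    · split_ifs <;> linarith
    · split_ifs <;> linarith
  refine (Finset.prod_le_prod hnn hfac).trans ?_
  rw [Finset.prod_mul_distrib, ← Real.exp_sum]
  have hPP := PP_pos hg X
  unfold PP at hPP ⊢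
  apply mul_le_mul_of_nonneg_right _ hPP.le
  apply Real.exp_le_exp.2
  rw [Finset.sum_add_distrib, ← Finset.mul_sum, ← Finset.mul_sum, e3, ← Finset.sum_filter,
    ← Finset.sum_filter]
  rw [show 6 * Real.log X / Real.log z = 2 * (3 * Real.log X / Real.log z) by ring]
  linarith

lemma rankin_sum {α β θ : ℝ} {g : ℕ → ℝ} (hα : 1 ≤ α) (hβ : 1 ≤ β) (hθ : θ ≤ 1 / 1000)
    (hg : Hyp α β θ g) {K X y z : ℝ} (hK : 0 ≤ K) (hyK : 10 * K ≤ Real.log y) (hz : 1 < z)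
    (hzy : z ≤ y) (hyX : y ≤ X) (hy : 2 ≤ y) (A : Finset ℕ)
    (hA : ∀ a ∈ A, a ≠ 0 ∧ ∀ p, p.Prime → p ∣ a → (p:ℝ) < y) :
    WW z * ∑ a ∈ A, FF g (K / Real.log y) a ≤
      Real.exp (2 * Ceta α β K) * Real.exp (6 * Real.log X / Real.log z) * PP g X := by
  have hly : 0 < Real.log y := Real.log_pos (by linarith)
  have hσ0 : 0 ≤ K / Real.log y := by positivity
  have hσ : K / Real.log y ≤ 1 / 10 := by rw [div_le_div_iff₀ hly (by norm_num)]; linarith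
  have h1 := FF_sum hα hβ hθ hg hσ0 hσ y A hA
  have h2 := euler_cmp hg.nn (η := etaf α β (K / Real.log y))
    (fun p hp => etaf_nn hα hβ hσ0 hp) X y z hz hzy hyX (hy.trans hyX)
  have h3 := eta_sum (α := α) (β := β) hα hβ hK hy
  have hW := WW_pos z
  refine (mul_le_mul_of_nonneg_left h1 hW.le).trans (h2.trans ?_)
  rw [← Real.exp_add]
  apply mul_le_mul_of_nonneg_right _ (PP_pos hg.nn X).le
  apply Real.exp_le_exp.2
  linarith

end ShiuAux

namespace ShiuAux

lemma g_le_pow {α β θ : ℝ} {g : ℕ → ℝ} (hα : 1 ≤ α) (hg : Hyp α β θ g) (m : ℕ) (hm : m ≠ 0) :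
    g m ≤ α ^ m.primeFactorsList.length := by
  induction m using Nat.recOnPosPrimePosCoprime with
  | zero => exact absurd rfl hm
  | one => simp [hg.one]
  | prime_pow p n hp hn =>
    rw [hp.primeFactorsList_pow, List.length_replicate]
    exact hg.pow p hp n hn
  | coprime a b ha hb hab iha ihb =>
    rw [hg.mul a b hab, (Nat.perm_primeFactorsList_mul_of_coprime hab).length_eq,
      List.length_append, pow_add]
    have := iha (by omega)
    have := ihb (by omega)
    have := hg.nn b
    gcongr

lemma g_rough {α β θ : ℝ} {g : ℕ → ℝ} (hα : 1 ≤ α) (hg : Hyp α β θ g) (m : ℕ) (hm : m ≠ 0)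
    (z : ℝ) (hz : 1 < z) (hr : ∀ p ∈ pr z, ¬ p ∣ m) (k : ℕ) (hmk : (m:ℝ) ≤ z ^ k) :
    g m ≤ α ^ k := by
  refine (g_le_pow hα hg m hm).trans ?_
  apply pow_le_pow_right₀ hα
  have h1 : z ^ m.primeFactorsList.length ≤ m := by
    have hprod : ((m.primeFactorsList.map (Nat.cast : ℕ → ℝ)).prod) = m := by
      rw [← Nat.cast_list_prod, Nat.prod_primeFactorsList hm]
    rw [← hprod]
    have : ∀ L : List ℕ, (∀ p ∈ L, z ≤ (p:ℝ)) → z ^ L.length ≤ (L.map (Nat.cast : ℕ → ℝ)).prod := by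
      intro L
      induction L with
      | nil => simp
      | cons p L ih =>
        intro h
        rw [List.length_cons, List.map_cons, List.prod_cons, pow_succ, mul_comm]
        have h1 := h p (by simp)
        have h2 := ih (fun q hq => h q (by simp [hq]))
        exact mul_le_mul h1 h2 (by positivity) (by linarith)
    apply this
    intro p hp
    by_contra h
    push Not at h
    rw [Nat.mem_primeFactorsList hm] at hp
    exact hr p (mem_pr.2 ⟨hp.1, h⟩) hp.2
  exact (pow_le_pow_iff_right₀ hz).1 (h1.trans hmk)

/-- Decomposition condition. -/
def Good (X δ τ : ℝ) (r l n : ℕ) : Prop :=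
  ∃ a b : ℕ, a ∣ n ∧ b ∣ n + l ∧ (∀ p : ℕ, p.Prime → p ∣ a → (p:ℝ) < X ^ (1 / (r:ℝ))) ∧
    (∀ p : ℕ, p.Prime → p ∣ b → (p:ℝ) < X ^ (1 / (r:ℝ))) ∧
    (∀ p ∈ pr (X ^ (1 / ((r:ℝ) + 1))), ¬ p ∣ n / a ∧ ¬ p ∣ (n + l) / b) ∧
    Nat.Coprime a (n / a) ∧ Nat.Coprime b ((n + l) / b) ∧
    X ^ τ ≤ (a:ℝ) * b ∧ (a:ℝ) * b ≤ X ^ δ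

open Classical in
lemma prop_r {α β θ : ℝ} {g : ℕ → ℝ} (hα : 1 ≤ α) (hβ : 1 ≤ β) (hθ : θ ≤ 1 / 1000)
    (hg : Hyp α β θ g) {K X Y H δ τ : ℝ} (hK : 0 ≤ K) (hX : 2 ≤ X) (hYX : Y ≤ X)
    (hH : 1 ≤ H) (hHX : H ≤ X) (r : ℕ) (hr : 1 ≤ r)
    (hz2 : 2 ≤ X ^ (1 / ((r:ℝ) + 1))) (hyK : 10 * K ≤ Real.log X / r)
    (hY : (X ^ (1 / ((r:ℝ) + 1))) ^ 360 * X ^ δ ≤ Y) :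
    ∑ l ∈ Icc 1 ⌊H⌋₊, ∑ n ∈ (Icc ⌈X⌉₊ ⌊X + Y⌋₊).filter (fun n => Good X δ τ r l n), g n * g (n + l)
      ≤ 16 * Real.exp 6 * α ^ (6 * (r + 1)) * Real.exp (-(τ * K * r)) *
        Real.exp (4 * Ceta α β K + 12 * (r + 1)) * H * Y * PP g X ^ 2 := by
  have hX0 : 0 < X := by linarith
  have hr0 : (0:ℝ) < r := by exact_mod_cast hr
  have hlX : 0 < Real.log X := Real.log_pos (by linarith)
  set y := X ^ (1 / (r:ℝ)) with hy
  set z := X ^ (1 / ((r:ℝ) + 1)) with hz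
  have hly : Real.log y = Real.log X / r := by rw [hy, Real.log_rpow hX0]; ring
  have hlz : Real.log z = Real.log X / (r + 1) := by rw [hz, Real.log_rpow hX0]; ring
  have hzy : z ≤ y := by
    apply Real.rpow_le_rpow_of_exponent_le (by linarith)
    apply one_div_le_one_div_of_le hr0; linarith
  have hyX : y ≤ X := by
    conv_rhs => rw [← Real.rpow_one X]
    apply Real.rpow_le_rpow_of_exponent_le (by linarith)
    rw [div_le_one hr0]; exact_mod_cast hr
  set σ := K / Real.log y with hσ
  have hσ0 : 0 ≤ σ := by rw [hσ, hly]; positivity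
  set A1 := (Icc 1 ⌊X ^ δ⌋₊).filter fun a => ∀ p : ℕ, p.Prime → p ∣ a → (p:ℝ) < y with hA1
  set A := (A1 ×ˢ A1).filter fun ab => X ^ τ ≤ (ab.1:ℝ) * ab.2 ∧ (ab.1:ℝ) * ab.2 ≤ X ^ δ with hA
  set k := 3 * (r + 1) with hk
  have hzk : z ^ k = X ^ 3 := by
    rw [hz, ← Real.rpow_natCast, ← Real.rpow_mul hX0.le, hk]
    push_cast
    rw [show 1 / ((r:ℝ) + 1) * (3 * (r + 1)) = (3:ℕ) by field_simp; norm_num, Real.rpow_natCast]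
  have hz1 : 1 < z := by linarith
  -- pointwise bound
  have hpt : ∀ l ∈ Icc 1 ⌊H⌋₊, ∀ n ∈ (Icc ⌈X⌉₊ ⌊X + Y⌋₊).filter (fun n => Good X δ τ r l n),
      g n * g (n + l) ≤ ∑ ab ∈ A, if n ∈ sift X Y z ab.1 ab.2 l then
        α ^ (2 * k) * (g ab.1 * g ab.2) else 0 := by
    intro l hl n hn
    rw [mem_filter] at hn
    obtain ⟨hnI, a, b, han, hbn, hap, hbp, hrough, hca, hcb, hE, hB⟩ := hn
    rw [mem_Icc] at hl
    rw [mem_Icc] at hnI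
    have hn1 : X ≤ n := Nat.ceil_le.1 hnI.1
    have hn2 : (n:ℝ) ≤ X + Y := (Nat.le_floor_iff' (by
      have : (0:ℝ) < n := by linarith
      exact_mod_cast this.ne')).1 hnI.2
    have hl2 : (l:ℝ) ≤ H := (Nat.le_floor_iff' (by omega)).1 hl.2
    have hn0 : n ≠ 0 := by
      have : (0:ℝ) < n := by linarith
      exact_mod_cast this.ne'
    have ha0 : a ≠ 0 := by rintro rfl; rw [zero_dvd_iff] at han; omega
    have hb0 : b ≠ 0 := by rintro rfl; rw [zero_dvd_iff] at hbn; omega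
    have ha1 : (1:ℝ) ≤ a := by exact_mod_cast Nat.one_le_iff_ne_zero.2 ha0
    have hb1 : (1:ℝ) ≤ b := by exact_mod_cast Nat.one_le_iff_ne_zero.2 hb0
    have h3X : 3 * X ≤ z ^ k := by rw [hzk]; nlinarith [mul_pos hX0 hX0]
    have hmem : (a, b) ∈ A := by
      rw [hA, mem_filter, mem_product, hA1, mem_filter, mem_filter, mem_Icc, mem_Icc]
      refine ⟨⟨⟨⟨by omega, ?_⟩, hap⟩, ⟨by omega, ?_⟩, hbp⟩, hE, hB⟩
      · apply Nat.le_floor; nlinarith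
      · apply Nat.le_floor; nlinarith
    have hsift : n ∈ sift X Y z a b l := by
      rw [sift, mem_filter, mem_Icc]
      exact ⟨hnI, han, hbn, hrough⟩
    have g1 : g n ≤ g a * α ^ k := by
      conv_lhs => rw [← Nat.mul_div_cancel' han]
      rw [hg.mul _ _ hca]
      apply mul_le_mul_of_nonneg_left _ (hg.nn a)
      apply g_rough hα hg _ _ z hz1 (fun p hp => (hrough p hp).1)
      · refine le_trans ?_ h3X
        have : ((n / a : ℕ) : ℝ) ≤ n := by exact_mod_cast Nat.div_le_self n a
        linarith
      · exact (Nat.div_pos (Nat.le_of_dvd (by omega) han) (by omega)).ne'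
    have g2 : g (n + l) ≤ g b * α ^ k := by
      conv_lhs => rw [← Nat.mul_div_cancel' hbn]
      rw [hg.mul _ _ hcb]
      apply mul_le_mul_of_nonneg_left _ (hg.nn b)
      apply g_rough hα hg _ _ z hz1 (fun p hp => (hrough p hp).2)
      · refine le_trans ?_ h3X
        have : (((n + l) / b : ℕ) : ℝ) ≤ (n + l : ℕ) := by exact_mod_cast Nat.div_le_self _ b
        push_cast at this
        linarith
      · exact (Nat.div_pos (Nat.le_of_dvd (by omega) hbn) (by omega)).ne'
    have hterm : g n * g (n + l) ≤ if n ∈ sift X Y z (a, b).1 (a, b).2 l then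
        α ^ (2 * k) * (g (a, b).1 * g (a, b).2) else 0 := by
      simp only [hsift, if_true]
      calc g n * g (n + l) ≤ (g a * α ^ k) * (g b * α ^ k) :=
            mul_le_mul g1 g2 (hg.nn _) (mul_nonneg (hg.nn a) (by positivity))
        _ = _ := by ring
    refine hterm.trans ?_
    apply Finset.single_le_sum (f := fun ab : ℕ × ℕ => if n ∈ sift X Y z ab.1 ab.2 l then
        α ^ (2 * k) * (g ab.1 * g ab.2) else 0) _ hmem
    intro ab _
    have := hg.nn ab.1
    have := hg.nn ab.2
    split_ifs <;> positivity
  have hA1m : ∀ a ∈ A1, a ≠ 0 ∧ ∀ p, p.Prime → p ∣ a → (p:ℝ) < y := by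
    intro a ha
    rw [hA1, mem_filter, mem_Icc] at ha
    exact ⟨by omega, ha.2⟩
  have hY0 : 0 ≤ Y := le_trans (by positivity) hY
  have hswap : ∑ l ∈ Icc 1 ⌊H⌋₊, ∑ n ∈ (Icc ⌈X⌉₊ ⌊X + Y⌋₊).filter (fun n => Good X δ τ r l n),
      g n * g (n + l) ≤ ∑ ab ∈ A, α ^ (2 * k) * (g ab.1 * g ab.2) *
        ∑ l ∈ Icc 1 ⌊H⌋₊, (#(sift X Y z ab.1 ab.2 l) : ℝ) := by
    calc _ ≤ ∑ l ∈ Icc 1 ⌊H⌋₊, ∑ n ∈ Icc ⌈X⌉₊ ⌊X + Y⌋₊, ∑ ab ∈ A,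
            if n ∈ sift X Y z ab.1 ab.2 l then α ^ (2 * k) * (g ab.1 * g ab.2) else 0 := by
          apply Finset.sum_le_sum
          intro l hl
          refine (Finset.sum_le_sum (hpt l hl)).trans ?_
          apply Finset.sum_le_sum_of_subset_of_nonneg (filter_subset _ _)
          intro n _ _
          apply Finset.sum_nonneg
          intro ab _
          have := hg.nn ab.1
          have := hg.nn ab.2
          split_ifs <;> positivity
      _ = ∑ l ∈ Icc 1 ⌊H⌋₊, ∑ ab ∈ A, α ^ (2 * k) * (g ab.1 * g ab.2) *
            (#(sift X Y z ab.1 ab.2 l) : ℝ) := by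
          apply Finset.sum_congr rfl
          intro l _
          rw [Finset.sum_comm]
          apply Finset.sum_congr rfl
          intro ab _
          rw [← Finset.sum_filter, Finset.sum_const, nsmul_eq_mul, mul_comm]
          congr 3
          ext n
          rw [mem_filter]
          exact ⟨fun h => h.2, fun h => ⟨(mem_filter.1 h).1, h⟩⟩
      _ = _ := by
          rw [Finset.sum_comm]
          apply Finset.sum_congr rfl
          intro ab _
          rw [Finset.mul_sum]
  refine hswap.trans ?_
  set C0 := α ^ (2 * k) * (16 * Real.exp 6 * H * Y) * X ^ (-(τ * σ)) with hC0
  have hC00 : 0 ≤ C0 := by positivity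
  have hab : ∀ ab ∈ A, α ^ (2 * k) * (g ab.1 * g ab.2) *
        ∑ l ∈ Icc 1 ⌊H⌋₊, (#(sift X Y z ab.1 ab.2 l) : ℝ)
      ≤ C0 * ((WW z * FF g σ ab.1) * (WW z * FF g σ ab.2)) := by
    intro ab hab
    rw [hA, mem_filter, mem_product] at hab
    obtain ⟨⟨ha, hb⟩, hE, hB⟩ := hab
    have ha0 := (hA1m _ ha).1
    have hb0 := (hA1m _ hb).1
    have hs := sieve_l X Y H z (by linarith) hz2 (by linarith) ab.1 ab.2 (Nat.pos_of_ne_zero ha0)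
      (Nat.pos_of_ne_zero hb0) (le_trans (by gcongr) hY)
    have hab0 : (0:ℝ) < (ab.1:ℝ) * ab.2 := by
      have : (0:ℝ) < ab.1 := by exact_mod_cast Nat.pos_of_ne_zero ha0
      have : (0:ℝ) < ab.2 := by exact_mod_cast Nat.pos_of_ne_zero hb0
      positivity
    have hrk : 1 ≤ X ^ (-(τ * σ)) * ((ab.1:ℝ) ^ σ * (ab.2:ℝ) ^ σ) := by
      rw [← Real.mul_rpow (by positivity) (by positivity), Real.rpow_neg hX0.le,
        Real.rpow_mul hX0.le, inv_mul_eq_div, one_le_div (by positivity)]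
      exact Real.rpow_le_rpow (by positivity) hE hσ0
    have hga := hg.nn ab.1
    have hgb := hg.nn ab.2
    have hW := WW_pos z
    calc _ ≤ α ^ (2 * k) * (g ab.1 * g ab.2) * (16 * Real.exp 6 * H * Y * WW z ^ 2 *
            (psi ab.1 ^ 2 / ab.1) * (psi ab.2 ^ 2 / ab.2)) * 1 := by
          rw [mul_one]; gcongr
      _ ≤ α ^ (2 * k) * (g ab.1 * g ab.2) * (16 * Real.exp 6 * H * Y * WW z ^ 2 *
            (psi ab.1 ^ 2 / ab.1) * (psi ab.2 ^ 2 / ab.2)) *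
            (X ^ (-(τ * σ)) * ((ab.1:ℝ) ^ σ * (ab.2:ℝ) ^ σ)) := by gcongr
      _ = _ := by rw [hC0, FF, FF]; ring
  refine (Finset.sum_le_sum hab).trans ?_
  rw [← Finset.mul_sum]
  have hFn : ∀ a, 0 ≤ WW z * FF g σ a := fun a => mul_nonneg (WW_pos z).le (FF_nn hg σ a)
  have hsum2 : ∑ ab ∈ A, (WW z * FF g σ ab.1) * (WW z * FF g σ ab.2)
      ≤ (WW z * ∑ a ∈ A1, FF g σ a) ^ 2 := by
    calc _ ≤ ∑ ab ∈ A1 ×ˢ A1, (WW z * FF g σ ab.1) * (WW z * FF g σ ab.2) := by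
          apply Finset.sum_le_sum_of_subset_of_nonneg (filter_subset _ _)
          intro ab _ _
          exact mul_nonneg (hFn _) (hFn _)
      _ = _ := by
          rw [Finset.sum_product, sq, Finset.mul_sum, Finset.sum_mul_sum]
  have hrs := rankin_sum hα hβ hθ hg hK (by rw [hly]; exact hyK) hz1 hzy hyX (hz2.trans hzy) A1 hA1m
  rw [← hσ, hlz, show 6 * Real.log X / (Real.log X / ((r:ℝ) + 1)) = 6 * (r + 1) by
    field_simp] at hrs
  have hPP := PP_pos hg.nn X
  have hnn : 0 ≤ WW z * ∑ a ∈ A1, FF g σ a :=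
    mul_nonneg (WW_pos z).le (Finset.sum_nonneg fun a _ => FF_nn hg σ a)
  have hexpσ : X ^ (-(τ * σ)) = Real.exp (-(τ * K * r)) := by
    rw [Real.rpow_def_of_pos hX0, hσ, hly]
    congr 1
    field_simp
  calc _ ≤ C0 * (Real.exp (2 * Ceta α β K) * Real.exp (6 * (r + 1)) * PP g X) ^ 2 := by
        apply mul_le_mul_of_nonneg_left _ hC00
        exact hsum2.trans (by gcongr)
    _ = _ := by
        have e1 : Real.exp (4 * Ceta α β K + 12 * (r + 1)) =
            (Real.exp (2 * Ceta α β K) * Real.exp (6 * (r + 1))) ^ 2 := by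
          rw [← Real.exp_add, ← Real.exp_nat_mul]; congr 1; push_cast; ring
        have e2 : 2 * k = 6 * (r + 1) := by rw [hk]; ring
        rw [e1, hC0, hexpσ, e2]; ring

end ShiuAux

namespace ShiuAux

lemma PP_lower (w : ℝ) (hw : 1 < w) : ∃ c : ℝ, 0 < c ∧ ∀ g : ℕ → ℝ, (∀ n, 0 ≤ g n) →
    ∀ X : ℝ, 2 ≤ X → c * X ^ (-(6 / Real.log w)) ≤ PP g X := by
  refine ⟨Real.exp (-(2 * (⌈w⌉₊:ℝ))), Real.exp_pos _, ?_⟩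
  intro g hg X hX
  have hX0 : 0 < X := by linarith
  set Q := (Finset.Icc 1 ⌊X⌋₊).filter Nat.Prime with hQ
  have hQm : ∀ p ∈ Q, p.Prime ∧ (p:ℝ) ≤ X := by
    intro p
    rw [hQ, mem_filter, mem_Icc, Nat.le_floor_iff (by linarith)]
    rintro ⟨⟨_, h⟩, h'⟩; exact ⟨h', h⟩
  have h1 : ∏ p ∈ Q, Real.exp (-(2 * (1 / (p:ℝ)))) ≤ PP g X := by
    apply Finset.prod_le_prod
    · intros; positivity
    · intro p hp
      have h2 : (2:ℝ) ≤ p := by exact_mod_cast (hQm p hp).1.two_le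
      have hgp : 0 ≤ g p / p := div_nonneg (hg p) (by linarith)
      rw [sub_div]
      have hx2 : 1 / (p:ℝ) ≤ 1 / 2 := by gcongr
      have hx0 : 0 < 1 / (p:ℝ) := by positivity
      set x := 1 / (p:ℝ)
      have hb : Real.exp (-(2 * x)) ≤ 1 - x := by
        rw [Real.exp_neg, inv_le_comm₀ (Real.exp_pos _) (by linarith)]
        have := Real.add_one_le_exp (2 * x)
        refine le_trans ?_ this
        rw [inv_le_comm₀ (by linarith) (by linarith), inv_le_iff_one_le_mul₀ (by linarith)]
        nlinarith
      linarith
  refine le_trans ?_ h1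
  rw [← Real.exp_sum, Finset.sum_neg_distrib, ← Finset.mul_sum, Real.rpow_def_of_pos hX0,
    ← Real.exp_add]
  apply Real.exp_le_exp.2
  have hm := mertens_inv w X hw hX (Q.filter fun p : ℕ => w ≤ (p:ℝ)) (by
    intro p hp
    rw [mem_filter] at hp
    exact ⟨(hQm p hp.1).1, hp.2, (hQm p hp.1).2⟩)
  have hs := Finset.sum_filter_add_sum_filter_not Q (fun p : ℕ => w ≤ (p:ℝ)) (fun p => 1 / (p:ℝ))
  have hsm : ∑ p ∈ Q.filter (fun p : ℕ => ¬ w ≤ (p:ℝ)), 1 / (p:ℝ) ≤ ⌈w⌉₊ := by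
    calc _ ≤ ∑ p ∈ Q.filter (fun p : ℕ => ¬ w ≤ (p:ℝ)), (1:ℝ) := by
          apply Finset.sum_le_sum
          intro p hp
          have h2 : (2:ℝ) ≤ p := by exact_mod_cast (hQm p (mem_filter.1 hp).1).1.two_le
          rw [div_le_one (by linarith)]; linarith
      _ = (#(Q.filter (fun p : ℕ => ¬ w ≤ (p:ℝ))) : ℝ) := by simp
      _ ≤ (#(range ⌈w⌉₊) : ℝ) := by
          have : Q.filter (fun p : ℕ => ¬ w ≤ (p:ℝ)) ⊆ range ⌈w⌉₊ := by
            intro p hp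
            rw [mem_range, Nat.lt_ceil]
            exact not_le.1 (mem_filter.1 hp).2
          exact_mod_cast card_le_card this
      _ = _ := by simp
  have e : Real.log X * -(6 / Real.log w) = -(2 * (3 * Real.log X / Real.log w)) := by ring
  rw [e]
  linarith

lemma count_dvd_shift (X Y : ℝ) (hX : 1 ≤ X) (d s : ℕ) (hd : 0 < d) (hdY : (d:ℝ) ≤ Y) :
    (#((Icc ⌈X⌉₊ ⌊X + Y⌋₊).filter fun n => d ∣ n + s) : ℝ) ≤ 3 * Y * (1 / d) := by
  have hd0 : (0:ℝ) < d := by exact_mod_cast hd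
  have h := count_two X Y hX (by linarith) 1 d s one_pos hd (by simp)
  simp only [one_dvd, true_and, Nat.lcm_one_left] at h
  have h2 := (abs_le.1 h).2
  have h3 : 1 ≤ Y / d := by rw [one_le_div hd0]; exact hdY
  have e : 3 * Y * (1 / (d:ℝ)) = 3 * (Y / d) := by ring
  rw [e]; linarith

open Classical in
lemma exc_sum {α β θ : ℝ} {g : ℕ → ℝ} (hβ : 1 ≤ β) (hθ0 : 0 ≤ θ) (hθ : θ ≤ 1 / 1000)
    (hg : Hyp α β θ g) {X Y H : ℝ} (hX : 2 ≤ X) (hYX : Y ≤ X) (hY0 : 0 ≤ Y)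
    (hH : 1 ≤ H) (hHX : H ≤ X) (D : Finset ℕ) (hD : ∀ d ∈ D, 0 < d ∧ (d:ℝ) ≤ Y) :
    ∑ l ∈ Icc 1 ⌊H⌋₊, ∑ n ∈ (Icc ⌈X⌉₊ ⌊X + Y⌋₊).filter
      (fun n => ∃ d ∈ D, d ∣ n ∨ d ∣ n + l), g n * g (n + l)
      ≤ 54 * β ^ 2 * X ^ (2 * θ) * H * Y * ∑ d ∈ D, 1 / (d:ℝ) := by
  have hX0 : 0 < X := by linarith
  have hb : ∀ m : ℕ, 1 ≤ m → (m:ℝ) ≤ 3 * X → g m ≤ 3 * β * X ^ θ := by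
    intro m hm hm3
    refine (hg.bd m hm).trans ?_
    have h1 : (m:ℝ) ^ θ ≤ 3 * X ^ θ := by
      calc (m:ℝ) ^ θ ≤ (3 * X) ^ θ := Real.rpow_le_rpow (by positivity) hm3 hθ0
        _ = 3 ^ θ * X ^ θ := Real.mul_rpow (by norm_num) hX0.le
        _ ≤ 3 ^ (1:ℝ) * X ^ θ := by
            gcongr
            · norm_num
            · linarith
        _ = _ := by rw [Real.rpow_one]
    calc β * (m:ℝ) ^ θ ≤ β * (3 * X ^ θ) := by gcongr
      _ = _ := by ring
  have hin : ∀ l ∈ Icc 1 ⌊H⌋₊, ∑ n ∈ (Icc ⌈X⌉₊ ⌊X + Y⌋₊).filter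
      (fun n => ∃ d ∈ D, d ∣ n ∨ d ∣ n + l), g n * g (n + l)
      ≤ (9 * β ^ 2 * X ^ (2 * θ)) * (6 * Y * ∑ d ∈ D, 1 / (d:ℝ)) := by
    intro l hl
    rw [mem_Icc] at hl
    have hl2 : (l:ℝ) ≤ H := (Nat.le_floor_iff' (by omega)).1 hl.2
    calc _ ≤ ∑ n ∈ (Icc ⌈X⌉₊ ⌊X + Y⌋₊).filter
          (fun n => ∃ d ∈ D, d ∣ n ∨ d ∣ n + l), (9 * β ^ 2 * X ^ (2 * θ)) := by
          apply Finset.sum_le_sum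
          intro n hn
          rw [mem_filter, mem_Icc] at hn
          have hn1 : X ≤ n := Nat.ceil_le.1 hn.1.1
          have hn0 : n ≠ 0 := by
            have : (0:ℝ) < n := by linarith
            exact_mod_cast this.ne'
          have hn2 : (n:ℝ) ≤ X + Y := (Nat.le_floor_iff' hn0).1 hn.1.2
          have b1 := hb n (by omega) (by linarith)
          have b2 := hb (n + l) (by omega) (by push_cast; linarith)
          calc g n * g (n + l) ≤ (3 * β * X ^ θ) * (3 * β * X ^ θ) :=
                mul_le_mul b1 b2 (hg.nn _) (by positivity)
            _ = 9 * β ^ 2 * (X ^ θ * X ^ θ) := by ring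
            _ = _ := by rw [← Real.rpow_add hX0, two_mul]
      _ = (9 * β ^ 2 * X ^ (2 * θ)) * #((Icc ⌈X⌉₊ ⌊X + Y⌋₊).filter
          (fun n => ∃ d ∈ D, d ∣ n ∨ d ∣ n + l)) := by
          rw [Finset.sum_const, nsmul_eq_mul, mul_comm]
      _ ≤ _ := by
          apply mul_le_mul_of_nonneg_left _ (by positivity)
          have hsub : (Icc ⌈X⌉₊ ⌊X + Y⌋₊).filter (fun n => ∃ d ∈ D, d ∣ n ∨ d ∣ n + l) ⊆
              D.biUnion fun d => ((Icc ⌈X⌉₊ ⌊X + Y⌋₊).filter fun n => d ∣ n + 0) ∪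
                ((Icc ⌈X⌉₊ ⌊X + Y⌋₊).filter fun n => d ∣ n + l) := by
            intro n hn
            rw [mem_filter] at hn
            obtain ⟨hnI, d, hd, h⟩ := hn
            rw [mem_biUnion]
            refine ⟨d, hd, ?_⟩
            rw [mem_union, mem_filter, mem_filter]
            tauto
          calc _ ≤ ((∑ d ∈ D, (#((Icc ⌈X⌉₊ ⌊X + Y⌋₊).filter fun n => d ∣ n + 0) +
                #((Icc ⌈X⌉₊ ⌊X + Y⌋₊).filter fun n => d ∣ n + l)) : ℕ) : ℝ) := by
                norm_cast
                refine (card_le_card hsub).trans (card_biUnion_le.trans ?_)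
                exact Finset.sum_le_sum fun d _ => card_union_le _ _
            _ ≤ ∑ d ∈ D, 6 * Y * (1 / (d:ℝ)) := by
                push_cast
                apply Finset.sum_le_sum
                intro d hd
                have c1 := count_dvd_shift X Y (by linarith) d 0 (hD d hd).1 (hD d hd).2
                have c2 := count_dvd_shift X Y (by linarith) d l (hD d hd).1 (hD d hd).2
                linarith
            _ = _ := by rw [Finset.mul_sum]
  refine (Finset.sum_le_sum hin).trans ?_
  rw [Finset.sum_const, nsmul_eq_mul, Nat.card_Icc, Nat.add_sub_cancel]
  have hfl : (⌊H⌋₊:ℝ) ≤ H := Nat.floor_le (by linarith)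
  have hs : 0 ≤ ∑ d ∈ D, 1 / (d:ℝ) := Finset.sum_nonneg fun d _ => by positivity
  calc _ ≤ H * ((9 * β ^ 2 * X ^ (2 * θ)) * (6 * Y * ∑ d ∈ D, 1 / (d:ℝ))) := by gcongr
    _ = _ := by ring

end ShiuAux

namespace ShiuAux

/-- the w-smooth part of n -/
def sp (w n : ℕ) : ℕ := ∏ p ∈ (range w).filter Nat.Prime, p ^ n.factorization p

lemma sp_zero (n : ℕ) : sp 0 n = 1 := by simp [sp]

lemma sp_succ_prime (q n : ℕ) (hq : q.Prime) : sp (q + 1) n = sp q n * q ^ n.factorization q := by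
  unfold sp
  rw [range_add_one, filter_insert, if_pos hq, prod_insert (by simp), mul_comm]

lemma sp_succ_not (q n : ℕ) (hq : ¬ q.Prime) : sp (q + 1) n = sp q n := by
  unfold sp
  rw [range_add_one, filter_insert, if_neg hq]

lemma sp_dvd (w n : ℕ) : sp w n ∣ n := by
  apply Finset.prod_dvd_of_isRelPrime
  · intro p hp q hq hpq
    rw [mem_coe, mem_filter] at hp hq
    rw [Function.onFun, ← Nat.coprime_iff_isRelPrime]
    exact Nat.Coprime.pow _ _ ((Nat.coprime_primes hp.2 hq.2).2 hpq)
  · intro p _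
    exact Nat.ordProj_dvd n p

lemma sp_smooth {w n p : ℕ} (hp : p.Prime) (h : p ∣ sp w n) : p < w := by
  rw [sp, Prime.dvd_finsetProd_iff hp.prime] at h
  obtain ⟨q, hq, hpq⟩ := h
  rw [mem_filter, mem_range] at hq
  have := hp.dvd_of_dvd_pow hpq
  rw [Nat.prime_dvd_prime_iff_eq hp hq.2] at this
  omega

lemma sp_rough {w n p : ℕ} (hn : n ≠ 0) (hp : p.Prime) (hpw : p < w) : ¬ p ∣ n / sp w n := by
  intro h
  have h1 : p ^ n.factorization p ∣ sp w n :=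
    Finset.dvd_prod_of_mem (fun p => p ^ n.factorization p)
      (mem_filter.2 ⟨mem_range.2 hpw, hp⟩)
  have h2 : p ^ (n.factorization p + 1) ∣ n := by
    rw [pow_succ]
    exact (mul_dvd_mul h1 h).trans (by rw [Nat.mul_div_cancel' (sp_dvd w n)])
  exact Nat.pow_succ_factorization_not_dvd hn hp h2

lemma sp_coprime {w n : ℕ} (hn : n ≠ 0) : Nat.Coprime (sp w n) (n / sp w n) := by
  apply Nat.Coprime.symm
  apply Nat.coprime_of_dvd
  intro p hp h1 h2
  exact sp_rough hn hp (sp_smooth hp h2) h1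

open Classical in
noncomputable def DS (X δ zs : ℝ) : Finset ℕ :=
  (Icc 1 ⌊X ^ δ⌋₊).filter fun d => X ^ (δ / 4) ≤ (d:ℝ) ∧ ∀ p : ℕ, p.Prime → p ∣ d → (p:ℝ) < zs

noncomputable def DP (X δ : ℝ) (R : ℕ) : Finset ℕ :=
  (pr (X ^ (1 / (R:ℝ)))).image fun q => q ^ (Nat.clog q ⌈X ^ (δ / 4)⌉₊)

lemma good_of_sp (X δ τ : ℝ) (r l n w : ℕ) (hn : n ≠ 0)
    (hw1 : ∀ p : ℕ, p < w → (p:ℝ) < X ^ (1 / (r:ℝ)))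
    (hw2 : ∀ p : ℕ, (p:ℝ) < X ^ (1 / ((r:ℝ) + 1)) → p < w)
    (h1 : X ^ τ ≤ (sp w n : ℝ) * sp w (n + l)) (h2 : (sp w n : ℝ) * sp w (n + l) ≤ X ^ δ) :
    Good X δ τ r l n := by
  refine ⟨sp w n, sp w (n + l), sp_dvd _ _, sp_dvd _ _, ?_, ?_, ?_, sp_coprime hn,
    sp_coprime (by omega), h1, h2⟩
  · intro p hp h; exact hw1 p (sp_smooth hp h)
  · intro p hp h; exact hw1 p (sp_smooth hp h)
  · intro p hp
    rw [mem_pr] at hp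
    exact ⟨sp_rough hn hp.1 (hw2 p hp.2), sp_rough (by omega) hp.1 (hw2 p hp.2)⟩

lemma decomp (X δ zs : ℝ) (hX : 2 ≤ X) (hδ : 0 < δ) (hzs : 3 ≤ zs) (R : ℕ) (hR : 2 ≤ R)
    (n l : ℕ) (hn : n ≠ 0) :
    Good X δ 0 (R - 1) l n ∨
    (∃ r : ℕ, R ≤ r ∧ r ≤ ⌊Real.log X⌋₊ ∧ Real.log zs ≤ Real.log X / r ∧ Good X δ (δ / 2) r l n) ∨
    (∃ d ∈ DS X δ zs ∪ DP X δ R, d ∣ n ∨ d ∣ n + l) := by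
  have hX0 : 0 < X := by linarith
  have hX1 : 1 < X := by linarith
  have hlX : 0 < Real.log X := Real.log_pos hX1
  have hR0 : (2:ℝ) ≤ R := by exact_mod_cast hR
  set f : ℕ → ℝ := fun w => (sp w n : ℝ) * sp w (n + l) with hf
  set w0 := ⌈X ^ (1 / (R:ℝ))⌉₊ with hw0
  have hspos : ∀ w m : ℕ, m ≠ 0 → (1:ℝ) ≤ sp w m := by
    intro w m hm
    exact_mod_cast Nat.pos_of_dvd_of_pos (sp_dvd w m) (Nat.pos_of_ne_zero hm)
  have hRc : ((R - 1 : ℕ) : ℝ) = R - 1 := by push_cast [show 1 ≤ R by omega]; ring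
  by_cases hI : f w0 ≤ X ^ δ
  · left
    apply good_of_sp X δ 0 (R - 1) l n w0 hn
    · intro p hp
      rw [hw0, Nat.lt_ceil] at hp
      refine hp.trans_le ?_
      apply Real.rpow_le_rpow_of_exponent_le hX1.le
      rw [hRc]
      apply one_div_le_one_div_of_le <;> linarith
    · intro p hp
      rw [hRc, sub_add_cancel] at hp
      exact Nat.lt_ceil.2 hp
    · rw [Real.rpow_zero]
      nlinarith [hspos w0 n hn, hspos w0 (n + l) (by omega)]
    · exact hI
  right
  push Not at hI
  have hex : ∃ w, X ^ δ < f w := ⟨w0, hI⟩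
  classical
  obtain ⟨q, hq1, hq2, hqw⟩ : ∃ q, f q ≤ X ^ δ ∧ X ^ δ < f (q + 1) ∧ q < w0 := by
    have h0 : Nat.find hex ≠ 0 := by
      intro h
      have := Nat.find_spec hex
      rw [h] at this
      simp only [hf, sp_zero] at this
      have h1 : 1 ≤ X ^ δ := Real.one_le_rpow hX1.le hδ.le
      norm_num at this
      linarith
    refine ⟨Nat.find hex - 1, ?_, ?_, ?_⟩
    · exact not_lt.1 (Nat.find_min hex (by omega))
    · rw [Nat.sub_add_cancel (by omega)]
      exact Nat.find_spec hex
    · have := Nat.find_min' hex hI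
      omega
  have hqp : q.Prime := by
    by_contra h
    simp only [hf, sp_succ_not _ _ h] at hq2 hq1
    linarith
  have hqX : (q:ℝ) < X ^ (1 / (R:ℝ)) := Nat.lt_ceil.1 hqw
  have ha1 := hspos q n hn
  have hb1 := hspos q (n + l) (by omega)
  have hhalf : X ^ (δ / 4) * X ^ (δ / 4) = X ^ (δ / 2) := by
    rw [← Real.rpow_add hX0]; congr 1; ring
  have hfull : X ^ (δ / 2) * X ^ (δ / 2) = X ^ δ := by
    rw [← Real.rpow_add hX0]; congr 1; ring
  have ht0 : 0 < X ^ (δ / 4) := by positivity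
  by_cases hII : f q < X ^ (δ / 2)
  · right
    have hbig : X ^ (δ / 4) ≤ ((q ^ n.factorization q : ℕ) : ℝ) ∨
        X ^ (δ / 4) ≤ ((q ^ (n + l).factorization q : ℕ) : ℝ) := by
      by_contra hcon
      push Not at hcon
      simp only [hf, sp_succ_prime _ _ hqp] at hq2 hII
      push_cast at hq2 hcon
      have e1 : (q:ℝ) ^ n.factorization q * (q:ℝ) ^ (n + l).factorization q ≤ X ^ (δ / 2) := by
        rw [← hhalf]
        exact mul_le_mul hcon.1.le hcon.2.le (by positivity) ht0.le
      have e2 : ((sp q n : ℝ) * sp q (n + l)) *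
          ((q:ℝ) ^ n.factorization q * (q:ℝ) ^ (n + l).factorization q)
          ≤ X ^ (δ / 2) * X ^ (δ / 2) := mul_le_mul hII.le e1 (by positivity) (by positivity)
      rw [hfull] at e2
      nlinarith
    have key : ∀ m : ℕ, X ^ (δ / 4) ≤ ((q ^ m.factorization q : ℕ) : ℝ) →
        q ^ (Nat.clog q ⌈X ^ (δ / 4)⌉₊) ∣ m := by
      intro m hm
      refine (pow_dvd_pow q ?_).trans (Nat.ordProj_dvd m q)
      exact Nat.clog_le_of_le_pow (Nat.ceil_le.2 hm)
    refine ⟨q ^ (Nat.clog q ⌈X ^ (δ / 4)⌉₊), ?_, ?_⟩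
    · rw [mem_union]
      right
      exact mem_image.2 ⟨q, mem_pr.2 ⟨hqp, hqX⟩, rfl⟩
    · rcases hbig with h | h
      · exact Or.inl (key _ h)
      · exact Or.inr (key _ h)
  push Not at hII
  by_cases hIII : (q:ℝ) ≤ zs
  · right
    have hbig : X ^ (δ / 4) ≤ (sp q n : ℝ) ∨ X ^ (δ / 4) ≤ (sp q (n + l) : ℝ) := by
      by_contra hcon
      push Not at hcon
      have := mul_lt_mul'' hcon.1 hcon.2 (by positivity) (by positivity)
      rw [hhalf] at this
      exact absurd hII (not_le.2 this)
    have hle : ∀ m : ℕ, m ≠ 0 → (sp q m : ℝ) ≤ X ^ δ → X ^ (δ / 4) ≤ (sp q m : ℝ) →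
        sp q m ∈ DS X δ zs := by
      intro m hm h1 h2
      rw [DS, mem_filter, mem_Icc]
      refine ⟨⟨by exact_mod_cast hspos q m hm, Nat.le_floor h1⟩, h2, ?_⟩
      intro p hp hpd
      have : (p:ℝ) < q := by exact_mod_cast sp_smooth hp hpd
      linarith
    simp only [hf] at hq1
    rcases hbig with h | h
    · exact ⟨sp q n, mem_union_left _ (hle n hn (by nlinarith) h), Or.inl (sp_dvd _ _)⟩
    · exact ⟨sp q (n + l), mem_union_left _ (hle (n + l) (by omega) (by nlinarith) h),
        Or.inr (sp_dvd _ _)⟩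
  · left
    push Not at hIII
    have hq3 : (3:ℝ) < q := by linarith
    have hlq : 1 ≤ Real.log q := by
      rw [Real.le_log_iff_exp_le (by linarith)]
      have := Real.exp_one_lt_d9
      linarith
    have hlq0 : 0 < Real.log q := by linarith
    have hlqR : Real.log q < Real.log X / R := by
      have := Real.log_lt_log (by linarith) hqX
      rw [Real.log_rpow hX0] at this
      calc _ < _ := this
        _ = _ := by ring
    set r := ⌊Real.log X / Real.log q⌋₊ with hr
    have hRr : R ≤ r := by
      apply Nat.le_floor
      rw [lt_div_iff₀ (by linarith)] at hlqR
      rw [le_div_iff₀ hlq0]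
      linarith
    have hr0 : (0:ℝ) < r := by exact_mod_cast (by omega : 0 < r)
    have hr1 : (r:ℝ) ≤ Real.log X / Real.log q := Nat.floor_le (by positivity)
    have hr2 : Real.log X / Real.log q < r + 1 := Nat.lt_floor_add_one _
    have hlq1 : Real.log q ≤ Real.log X / r := by
      rw [le_div_iff₀ hr0]
      rw [le_div_iff₀ hlq0] at hr1
      linarith
    have hlq2 : Real.log X / (r + 1) < Real.log q := by
      rw [div_lt_iff₀ (by linarith)]
      rw [div_lt_iff₀ hlq0] at hr2
      linarith
    refine ⟨r, hRr, ?_, ?_, ?_⟩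
    · apply Nat.floor_le_floor
      rw [div_le_iff₀ hlq0]
      nlinarith
    · exact (Real.log_le_log (by linarith) hIII.le).trans hlq1
    · apply good_of_sp X δ (δ / 2) r l n q hn
      · intro p hp
        have hpq : (p:ℝ) < q := by exact_mod_cast hp
        refine hpq.trans_le ?_
        rw [← Real.log_le_log_iff (by linarith) (by positivity), Real.log_rpow hX0]
        calc _ ≤ _ := hlq1
          _ = _ := by ring
      · intro p hp
        have : X ^ (1 / ((r:ℝ) + 1)) < q := by
          rw [← Real.log_lt_log_iff (by positivity) (by linarith), Real.log_rpow hX0]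
          calc _ = Real.log X / (r + 1) := by ring
            _ < _ := hlq2
        exact_mod_cast hp.trans this
      · exact hII
      · exact hq1

end ShiuAux

namespace ShiuAux

open Classical in
lemma DS_sum (zs : ℝ) : ∃ C : ℝ, 0 ≤ C ∧ ∀ X δ : ℝ, 2 ≤ X →
    ∑ d ∈ DS X δ zs, 1 / (d:ℝ) ≤ C * X ^ (-(δ / 40)) := by
  have hyp : Hyp 1 1 0 (fun _ => (1:ℝ)) := by
    constructor <;> simp
  refine ⟨∏ p ∈ pr zs, (1 + (1:ℝ) / p + etaf 1 1 (1 / 10) p), ?_, ?_⟩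
  · apply Finset.prod_nonneg
    intro p hp
    have := etaf_nn (α := 1) (β := 1) (σ := 1 / 10) le_rfl le_rfl (by norm_num) (mem_pr.1 hp).1
    positivity
  intro X δ hX
  have hX0 : 0 < X := by linarith
  have h1 := FF_sum (α := 1) (β := 1) (θ := 0) le_rfl le_rfl (by norm_num) hyp
    (σ := 1 / 10) (by norm_num) le_rfl zs (DS X δ zs) (by
      intro a ha
      rw [DS, mem_filter, mem_Icc] at ha
      exact ⟨by omega, ha.2.2⟩)
  rw [mul_comm]
  calc ∑ d ∈ DS X δ zs, 1 / (d:ℝ)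
      ≤ ∑ d ∈ DS X δ zs, X ^ (-(δ / 40)) * FF (fun _ => (1:ℝ)) (1 / 10) d := by
        apply Finset.sum_le_sum
        intro d hd
        rw [DS, mem_filter, mem_Icc] at hd
        have hd1 : (1:ℝ) ≤ d := by exact_mod_cast hd.1.1
        have hp := psi_one_le d
        have h2 : 1 ≤ X ^ (-(δ / 40)) * (d:ℝ) ^ (1 / 10 : ℝ) := by
          have : X ^ (-(δ / 40)) = ((X ^ (δ / 4)) ^ (1 / 10 : ℝ))⁻¹ := by
            rw [← Real.rpow_mul hX0.le, ← Real.rpow_neg hX0.le]; congr 1; ring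
          rw [this, inv_mul_eq_div, one_le_div (by positivity)]
          exact Real.rpow_le_rpow (by positivity) hd.2.1 (by norm_num)
        unfold FF
        calc 1 / (d:ℝ) = 1 * (1 / d) := by ring
          _ ≤ (X ^ (-(δ / 40)) * (d:ℝ) ^ (1 / 10 : ℝ)) * (psi d ^ 2 / d) := by
              gcongr
              nlinarith
          _ = _ := by ring
    _ = X ^ (-(δ / 40)) * ∑ d ∈ DS X δ zs, FF (fun _ => (1:ℝ)) (1 / 10) d := by
        rw [Finset.mul_sum]
    _ ≤ _ := by gcongr

lemma DP_mem {X δ : ℝ} {R d : ℕ} (hX : 2 ≤ X) (hδ : 0 < δ) (hd : d ∈ DP X δ R) :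
    X ^ (δ / 4) ≤ (d:ℝ) ∧ (d:ℝ) ≤ X ^ (1 / (R:ℝ) + δ / 4) := by
  have hX0 : 0 < X := by linarith
  rw [DP, mem_image] at hd
  obtain ⟨q, hq, rfl⟩ := hd
  rw [mem_pr] at hq
  set t := X ^ (δ / 4) with ht
  have ht1 : 1 < t := Real.one_lt_rpow (by linarith) (by positivity)
  have hc1 : 1 < ⌈t⌉₊ := Nat.lt_ceil.2 (by exact_mod_cast ht1)
  have h1 : ⌈t⌉₊ ≤ q ^ (Nat.clog q ⌈t⌉₊) := Nat.le_pow_clog hq.1.one_lt _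
  have h2 : q ^ (Nat.clog q ⌈t⌉₊).pred < ⌈t⌉₊ := Nat.pow_pred_clog_lt_self hq.1.one_lt hc1
  have hpos : 0 < Nat.clog q ⌈t⌉₊ := Nat.clog_pos hq.1.one_lt (by omega)
  refine ⟨Nat.ceil_le.1 h1, ?_⟩
  have h3 : ((q ^ (Nat.clog q ⌈t⌉₊).pred : ℕ) : ℝ) < t := Nat.lt_ceil.1 h2
  have e : q ^ (Nat.clog q ⌈t⌉₊) = q * q ^ (Nat.clog q ⌈t⌉₊).pred := by
    rw [← pow_succ']
    congr 1
    exact (Nat.succ_pred_eq_of_pos hpos).symm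
  rw [e, Nat.cast_mul, Real.rpow_add hX0]
  exact mul_le_mul hq.2.le h3.le (by positivity) (by positivity)

lemma DP_sum {X δ : ℝ} {R : ℕ} (hX : 2 ≤ X) (hδ : 0 < δ) :
    ∑ d ∈ DP X δ R, 1 / (d:ℝ) ≤ 2 * X ^ (1 / (R:ℝ) - δ / 4) := by
  have hX0 : 0 < X := by linarith
  have h1 : 1 ≤ X ^ (1 / (R:ℝ)) := Real.one_le_rpow (by linarith) (by positivity)
  have hc : (#(DP X δ R) : ℝ) ≤ 2 * X ^ (1 / (R:ℝ)) := by
    have h2 : #(DP X δ R) ≤ ⌈X ^ (1 / (R:ℝ))⌉₊ := by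
      refine card_image_le.trans ?_
      unfold pr
      exact (card_filter_le _ _).trans (by simp)
    have h3 := Nat.ceil_lt_add_one (show 0 ≤ X ^ (1 / (R:ℝ)) by positivity)
    have h4 : (#(DP X δ R) : ℝ) ≤ ⌈X ^ (1 / (R:ℝ))⌉₊ := by exact_mod_cast h2
    linarith
  calc ∑ d ∈ DP X δ R, 1 / (d:ℝ) ≤ ∑ d ∈ DP X δ R, 1 / X ^ (δ / 4) := by
        apply Finset.sum_le_sum
        intro d hd
        have := (DP_mem hX hδ hd).1
        gcongr
    _ = #(DP X δ R) * (1 / X ^ (δ / 4)) := by rw [Finset.sum_const, nsmul_eq_mul]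
    _ ≤ (2 * X ^ (1 / (R:ℝ))) * (1 / X ^ (δ / 4)) := by gcongr
    _ = _ := by rw [Real.rpow_sub hX0]; ring

lemma exp_sum_le (A : Finset ℕ) : ∑ r ∈ A, Real.exp (-(r:ℝ)) ≤ 2 := by
  have h0 : Real.exp (-1) ≤ 1 / 2 := by
    rw [Real.exp_neg, inv_le_comm₀ (Real.exp_pos _) (by norm_num)]
    have := Real.add_one_le_exp 1
    norm_num; linarith
  have h1 : ∀ r : ℕ, Real.exp (-(r:ℝ)) = Real.exp (-1) ^ r := by
    intro r; rw [← Real.exp_nat_mul]; congr 1; ring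
  have hs := hasSum_geometric_of_lt_one (Real.exp_pos (-1)).le (by linarith)
  calc ∑ r ∈ A, Real.exp (-(r:ℝ)) = ∑ r ∈ A, Real.exp (-1) ^ r :=
        Finset.sum_congr rfl fun r _ => h1 r
    _ ≤ (1 - Real.exp (-1))⁻¹ := sum_le_hasSum _ (fun r _ => by positivity) hs
    _ ≤ 2 := by rw [inv_le_comm₀ (by linarith) (by norm_num)]; norm_num; linarith

end ShiuAux

namespace ShiuAux

open Classical in
lemma exc_bound {α β ε c CD X Y H : ℝ} {g : ℕ → ℝ} (hβ : 1 ≤ β) (hε0 : 0 < ε) (hε1 : ε < 1)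
    (hg : Hyp α β (ε ^ 3 / 1000) g) (hc : 0 < c) (hX : 2 ≤ X) (hYX : Y ≤ X) (hY0 : 0 ≤ Y)
    (hH : 1 ≤ H) (hHX : H ≤ X) (hCD : 0 ≤ CD) (hPP : c * X ^ (-(ε / 4000)) ≤ PP g X)
    (D : Finset ℕ) (hD : ∀ d ∈ D, 0 < d ∧ (d:ℝ) ≤ Y)
    (hDs : ∑ d ∈ D, 1 / (d:ℝ) ≤ CD * X ^ (-(ε / 400))) :
    ∑ l ∈ Icc 1 ⌊H⌋₊, ∑ n ∈ (Icc ⌈X⌉₊ ⌊X + Y⌋₊).filter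
      (fun n => ∃ d ∈ D, d ∣ n ∨ d ∣ n + l), g n * g (n + l)
      ≤ 54 * β ^ 2 * CD / c ^ 2 * H * Y * PP g X ^ 2 := by
  have hX0 : 0 < X := by linarith
  have he3 : ε ^ 3 ≤ ε := by nlinarith [mul_pos hε0 hε0]
  have hθ0 : 0 ≤ ε ^ 3 / 1000 := by positivity
  refine (exc_sum hβ hθ0 (by linarith) hg hX hYX hY0 hH hHX D hD).trans ?_
  have h1 : X ^ (2 * (ε ^ 3 / 1000)) * X ^ (-(ε / 400)) ≤ (X ^ (-(ε / 4000))) ^ 2 := by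
    rw [← Real.rpow_add hX0, sq, ← Real.rpow_add hX0]
    apply Real.rpow_le_rpow_of_exponent_le (by linarith)
    linarith
  have h2 : (X ^ (-(ε / 4000))) ^ 2 ≤ PP g X ^ 2 / c ^ 2 := by
    rw [← div_pow]
    apply pow_le_pow_left₀ (by positivity)
    rw [le_div_iff₀ hc]; linarith
  calc 54 * β ^ 2 * X ^ (2 * (ε ^ 3 / 1000)) * H * Y * ∑ d ∈ D, 1 / (d:ℝ)
      ≤ 54 * β ^ 2 * X ^ (2 * (ε ^ 3 / 1000)) * H * Y * (CD * X ^ (-(ε / 400))) := by gcongr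
    _ = 54 * β ^ 2 * CD * H * Y * (X ^ (2 * (ε ^ 3 / 1000)) * X ^ (-(ε / 400))) := by ring
    _ ≤ 54 * β ^ 2 * CD * H * Y * (PP g X ^ 2 / c ^ 2) := by
        gcongr; exact h1.trans h2
    _ = _ := by ring

lemma hY_aux {ε X Y : ℝ} (hε0 : 0 < ε) (hX : 2 ≤ X) (hXY : X ^ ε ≤ Y) {t : ℝ} 
    (ht : t ≤ ε / 800) : (X ^ t) ^ 360 * X ^ (ε / 10) ≤ Y := by
  have hX0 : 0 < X := by linarith
  refine le_trans ?_ hXY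
  rw [← Real.rpow_natCast, ← Real.rpow_mul hX0.le, ← Real.rpow_add hX0]
  apply Real.rpow_le_rpow_of_exponent_le (by linarith)
  push_cast; linarith

lemma two_le_aux {X t : ℝ} (hX : 2 ≤ X) (ht : 1 ≤ Real.log X * t) : 2 ≤ X ^ t := by
  have hX0 : 0 < X := by linarith
  rw [Real.rpow_def_of_pos hX0]
  have := Real.add_one_le_exp (Real.log X * t)
  linarith

open Classical in
lemma split_sum {g : ℕ → ℝ} (hg : ∀ n, 0 ≤ g n) (L I : Finset ℕ) (RR : Finset ℕ)
    (A : ℕ → ℕ → Prop) (B : ℕ → ℕ → ℕ → Prop) (E : ℕ → ℕ → Prop)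
    (h : ∀ l ∈ L, ∀ n ∈ I, A l n ∨ (∃ r ∈ RR, B r l n) ∨ E l n) :
    ∑ l ∈ L, ∑ n ∈ I, g n * g (n + l) ≤
      ∑ l ∈ L, ∑ n ∈ I.filter (fun n => A l n), g n * g (n + l) +
      ∑ r ∈ RR, ∑ l ∈ L, ∑ n ∈ I.filter (fun n => B r l n), g n * g (n + l) +
      ∑ l ∈ L, ∑ n ∈ I.filter (fun n => E l n), g n * g (n + l) := by
  rw [Finset.sum_comm (s := RR), ← Finset.sum_add_distrib, ← Finset.sum_add_distrib]
  apply Finset.sum_le_sum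
  intro l hl
  simp only [Finset.sum_filter]
  rw [Finset.sum_comm (s := RR), ← Finset.sum_add_distrib, ← Finset.sum_add_distrib]
  apply Finset.sum_le_sum
  intro n hn
  have h0 : 0 ≤ g n * g (n + l) := mul_nonneg (hg _) (hg _)
  have hif : ∀ P : Prop, 0 ≤ (if P then g n * g (n + l) else 0) := by
    intro P; split_ifs <;> simp [h0]
  have hs : 0 ≤ ∑ r ∈ RR, (if B r l n then g n * g (n + l) else 0) :=
    Finset.sum_nonneg fun r _ => hif _
  rcases h l hl n hn with h1 | ⟨r, hr, h1⟩ | h1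
  · rw [if_pos h1]; linarith [hif (E l n)]
  · have := Finset.single_le_sum (f := fun r => if B r l n then g n * g (n + l) else 0)
      (fun r _ => hif _) hr
    simp only [if_pos h1] at this
    linarith [hif (E l n), hif (A l n)]
  · rw [if_pos h1]; linarith [hif (A l n)]

set_option maxHeartbeats 2000000 in
open Classical in
lemma main_bound (α β ε : ℝ) (hα : 1 ≤ α) (hβ : 1 ≤ β) (hε0 : 0 < ε) (hε1 : ε < 1) :
    ∃ C : ℝ, ∀ g : ℕ → ℝ, Hyp α β (ε ^ 3 / 1000) g →
      ∀ X Y H : ℝ, 2 ≤ X → X ^ ε ≤ Y → Y ≤ X → 1 ≤ H → H ≤ X →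
        ∑ l ∈ Finset.Icc 1 ⌊H⌋₊, ∑ n ∈ Finset.Icc ⌈X⌉₊ ⌊X + Y⌋₊, g n * g (n + l)
          ≤ C * H * Y * PP g X ^ 2 := by
  have hla : 0 ≤ Real.log α := Real.log_nonneg hα
  obtain ⟨δ, hδ⟩ : ∃ δ, δ = ε / 10 := ⟨_, rfl⟩
  have hδ0 : 0 < δ := by rw [hδ]; positivity
  obtain ⟨R, hR⟩ : ∃ R, R = ⌈800 / ε⌉₊ := ⟨_, rfl⟩
  have hR1 : 800 / ε ≤ R := by rw [hR]; exact Nat.le_ceil _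
  have hR2 : (800:ℝ) ≤ R := by
    refine le_trans ?_ hR1
    rw [le_div_iff₀ hε0]; linarith
  have hR3 : 800 ≤ R := by exact_mod_cast hR2
  have hR0 : (0:ℝ) < R := by linarith
  have hR4 : 1 / (R:ℝ) ≤ ε / 800 := by
    rw [div_le_iff₀ hε0] at hR1
    rw [div_le_div_iff₀ hR0 (by norm_num)]; linarith
  obtain ⟨K, hKd⟩ : ∃ K, K = 2 * (6 * Real.log α + 13) / δ := ⟨_, rfl⟩
  have hKδ : δ / 2 * K = 6 * Real.log α + 13 := by rw [hKd]; field_simp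
  have hK1 : 1 ≤ K := by
    rw [hKd, le_div_iff₀ hδ0]; linarith
  obtain ⟨c, hc, hPPl⟩ := PP_lower (Real.exp (24000 / ε)) (Real.one_lt_exp_iff.2 (by positivity))
  have he : 6 / Real.log (Real.exp (24000 / ε)) = ε / 4000 := by
    rw [Real.log_exp]; field_simp; norm_num
  rw [he] at hPPl
  obtain ⟨CD, hCD, hDS⟩ := DS_sum (Real.exp (10 * K))
  have hzs : 3 ≤ Real.exp (10 * K) := by
    have := Real.add_one_le_exp (10 * K); linarith
  obtain ⟨C1, hC1⟩ : ∃ C1, C1 = 16 * Real.exp 6 * α ^ (6 * R) *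
    Real.exp (4 * Ceta α β K + 12 * R) := ⟨_, rfl⟩
  obtain ⟨C2, hC2⟩ : ∃ C2, C2 = 16 * Real.exp 6 * α ^ 6 *
    Real.exp (4 * Ceta α β K + 12) := ⟨_, rfl⟩
  have hα0 : 0 < α := by linarith
  have hC10 : 0 ≤ C1 := by rw [hC1]; positivity
  have hC20 : 0 ≤ C2 := by rw [hC2]; positivity
  obtain ⟨C3, hC3⟩ : ∃ C3, C3 = 54 * β ^ 2 * (CD + 2) / c ^ 2 := ⟨_, rfl⟩
  have hC30 : 0 ≤ C3 := by rw [hC3]; positivity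
  obtain ⟨C4, hC4⟩ : ∃ C4, C4 = 54 * β ^ 2 * (Real.exp (10 * K * R)) / c ^ 2 := ⟨_, rfl⟩
  have hC40 : 0 ≤ C4 := by rw [hC4]; positivity
  refine ⟨C1 + C2 * 2 + C3 + C4, ?_⟩
  intro g hg X Y H hX hXY hYX hH hHX
  have hX0 : 0 < X := by linarith
  have hlX : 0 < Real.log X := Real.log_pos (by linarith)
  have hY1 : 1 ≤ Y := (Real.one_le_rpow (by linarith) hε0.le).trans hXY
  have hY0 : 0 ≤ Y := by linarith
  have hPP := hPPl g hg.nn X hX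
  have hQ : 0 ≤ H * Y * PP g X ^ 2 := by positivity
  by_cases hsm : Real.log X < 10 * K * R
  · have hD : ∑ d ∈ ({1} : Finset ℕ), 1 / (d:ℝ) ≤ Real.exp (10 * K * R) * X ^ (-(ε / 400)) := by
      simp only [Finset.sum_singleton, Nat.cast_one, div_one]
      rw [Real.rpow_def_of_pos hX0, ← Real.exp_add]
      apply Real.one_le_exp
      nlinarith
    have h1 := exc_bound hβ hε0 hε1 hg hc hX hYX hY0 hH hHX (Real.exp_pos _).le hPP {1}
      (by intro d hd; rw [Finset.mem_singleton] at hd; subst hd; simpa using hY1) hD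
    have h2 : ∑ l ∈ Finset.Icc 1 ⌊H⌋₊, ∑ n ∈ Finset.Icc ⌈X⌉₊ ⌊X + Y⌋₊, g n * g (n + l) ≤
        C4 * H * Y * PP g X ^ 2 := by
      rw [hC4]
      refine le_trans (le_of_eq ?_) h1
      apply Finset.sum_congr rfl
      intro l _
      rw [Finset.filter_true_of_mem]
      intro n _
      exact ⟨1, by simp, Or.inl (one_dvd _)⟩
    nlinarith [mul_nonneg hC10 hQ, mul_nonneg hC20 hQ, mul_nonneg hC30 hQ]
  push Not at hsm
  set RR := (Icc R ⌊Real.log X⌋₊).filter (fun r : ℕ => 10 * K ≤ Real.log X / r) with hRR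
  have hsplit := split_sum hg.nn (Icc 1 ⌊H⌋₊) (Icc ⌈X⌉₊ ⌊X + Y⌋₊) RR
    (fun l n => Good X δ 0 (R - 1) l n) (fun r l n => Good X δ (δ / 2) r l n)
    (fun l n => ∃ d ∈ DS X δ (Real.exp (10 * K)) ∪ DP X δ R, d ∣ n ∨ d ∣ n + l) (by
      intro l _ n hn
      have hn0 : n ≠ 0 := by
        rw [mem_Icc] at hn
        have : 0 < ⌈X⌉₊ := Nat.ceil_pos.2 hX0
        omega
      rcases decomp X δ _ hX hδ0 hzs R (by omega) n l hn0 with h | ⟨r, h1, h2, h3, h4⟩ | h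
      · exact Or.inl h
      · refine Or.inr (Or.inl ⟨r, ?_, h4⟩)
        rw [Real.log_exp] at h3
        rw [hRR, mem_filter, mem_Icc]
        exact ⟨⟨h1, h2⟩, h3⟩
      · exact Or.inr (Or.inr h))
  refine hsplit.trans ?_
  have hKX : 10 * K ≤ Real.log X / R := by rw [le_div_iff₀ hR0]; exact hsm
  -- Case I
  have hcast : ((R - 1 : ℕ) : ℝ) + 1 = R := by
    rw [Nat.cast_sub (by omega)]; push_cast; ring
  have b1 : ∑ l ∈ Icc 1 ⌊H⌋₊, ∑ n ∈ (Icc ⌈X⌉₊ ⌊X + Y⌋₊).filter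
      (fun n => Good X δ 0 (R - 1) l n), g n * g (n + l) ≤ C1 * H * Y * PP g X ^ 2 := by
    have hr1 : (0:ℝ) < ((R - 1 : ℕ) : ℝ) := by linarith
    have := prop_r hα hβ (θ := ε ^ 3 / 1000) (by
      have : ε ^ 3 ≤ 1 := pow_le_one₀ hε0.le hε1.le
      linarith) hg (K := K) (X := X) (Y := Y) (H := H) (δ := δ) (τ := 0) (by linarith) hX hYX hH hHX
      (R - 1) (by omega)
      (by
        rw [hcast]; apply two_le_aux hX
        rw [mul_one_div]; linarith)
      (by
        refine hKX.trans ?_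
        gcongr; omega)
      (by
        rw [hcast, hδ]; exact hY_aux hε0 hX hXY hR4)
    rw [hcast, show R - 1 + 1 = R by omega] at this
    refine this.trans (le_of_eq ?_)
    rw [hC1]; simp
  -- Case r
  have b2 : ∀ r ∈ RR, ∑ l ∈ Icc 1 ⌊H⌋₊, ∑ n ∈ (Icc ⌈X⌉₊ ⌊X + Y⌋₊).filter
      (fun n => Good X δ (δ / 2) r l n), g n * g (n + l) ≤
      (C2 * H * Y * PP g X ^ 2) * Real.exp (-(r:ℝ)) := by
    intro r hr
    rw [hRR, mem_filter, mem_Icc] at hr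
    obtain ⟨⟨hr1, hr2⟩, hr3⟩ := hr
    have hrR : (R:ℝ) ≤ r := by exact_mod_cast hr1
    have hr0 : (0:ℝ) < r := by linarith
    have := prop_r hα hβ (θ := ε ^ 3 / 1000) (by
      have : ε ^ 3 ≤ 1 := pow_le_one₀ hε0.le hε1.le
      linarith) hg (K := K) (X := X) (Y := Y) (H := H) (δ := δ) (τ := δ / 2)
      (by linarith) hX hYX hH hHX
      r (by omega)
      (by
        apply two_le_aux hX
        rw [mul_one_div, le_div_iff₀ (by linarith)]
        rw [le_div_iff₀ hr0] at hr3
        nlinarith)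
      hr3
      (by
        rw [hδ]; apply hY_aux hε0 hX hXY
        refine le_trans ?_ hR4
        gcongr; linarith)
    refine this.trans (le_of_eq ?_)
    have e1 : α ^ (6 * (r + 1)) = α ^ 6 * Real.exp (6 * Real.log α * r) := by
      rw [mul_add, pow_add, mul_one, mul_comm, mul_assoc, mul_comm (Real.log α), ← mul_assoc]
      congr 1
      rw [show (6:ℝ) * r = ((6 * r : ℕ) : ℝ) by push_cast; ring, Real.exp_nat_mul,
        Real.exp_log hα0]
    rw [hC2, e1, hKδ]
    have e2 : Real.exp (4 * Ceta α β K + 12 * ((r:ℝ) + 1)) =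
        Real.exp (4 * Ceta α β K + 12) * Real.exp (12 * r) := by
      rw [← Real.exp_add]; congr 1; ring
    have e3 : Real.exp (-(r:ℝ)) = Real.exp (6 * Real.log α * r) *
        Real.exp (-((6 * Real.log α + 13) * r)) * Real.exp (12 * r) := by
      rw [← Real.exp_add, ← Real.exp_add]; congr 1; ring
    rw [e2, e3]; ring
  have b2s : ∑ r ∈ RR, ∑ l ∈ Icc 1 ⌊H⌋₊, ∑ n ∈ (Icc ⌈X⌉₊ ⌊X + Y⌋₊).filter
      (fun n => Good X δ (δ / 2) r l n), g n * g (n + l) ≤ C2 * 2 * H * Y * PP g X ^ 2 := by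
    refine (Finset.sum_le_sum b2).trans ?_
    rw [← Finset.mul_sum]
    calc _ ≤ (C2 * H * Y * PP g X ^ 2) * 2 := by
          gcongr; exact exp_sum_le _
      _ = _ := by ring
  -- exceptional
  have b3 : ∑ l ∈ Icc 1 ⌊H⌋₊, ∑ n ∈ (Icc ⌈X⌉₊ ⌊X + Y⌋₊).filter
      (fun n => ∃ d ∈ DS X δ (Real.exp (10 * K)) ∪ DP X δ R, d ∣ n ∨ d ∣ n + l),
        g n * g (n + l) ≤ C3 * H * Y * PP g X ^ 2 := by
    rw [hC3]
    apply exc_bound hβ hε0 hε1 hg hc hX hYX hY0 hH hHX (by linarith) hPP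
    · intro d hd
      rw [mem_union] at hd
      rcases hd with hd | hd
      · simp only [DS, mem_filter, mem_Icc] at hd
        refine ⟨by omega, ?_⟩
        have h1 := (Nat.le_floor_iff (by positivity)).1 hd.1.2
        refine h1.trans (le_trans ?_ hXY)
        apply Real.rpow_le_rpow_of_exponent_le (by linarith); linarith
      · obtain ⟨h1, h2⟩ := DP_mem hX hδ0 hd
        have h3 : 0 < X ^ (δ / 4) := by positivity
        refine ⟨by exact_mod_cast h3.trans_le h1, ?_⟩
        refine h2.trans (le_trans ?_ hXY)
        apply Real.rpow_le_rpow_of_exponent_le (by linarith); linarith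
    · have h1 := hDS X δ hX
      have h2 := DP_sum (R := R) hX hδ0
      have h3 : X ^ (1 / (R:ℝ) - δ / 4) ≤ X ^ (-(ε / 400)) :=
        Real.rpow_le_rpow_of_exponent_le (by linarith) (by linarith)
      have h4 : X ^ (-(δ / 40)) = X ^ (-(ε / 400)) := by rw [hδ]; congr 1; ring
      rw [h4] at h1
      have h5 : ∑ d ∈ DS X δ (Real.exp (10 * K)) ∪ DP X δ R, 1 / (d:ℝ) ≤
          ∑ d ∈ DS X δ (Real.exp (10 * K)), 1 / (d:ℝ) + ∑ d ∈ DP X δ R, 1 / (d:ℝ) := by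
        rw [← Finset.sum_union_inter]
        have : 0 ≤ ∑ d ∈ DS X δ (Real.exp (10 * K)) ∩ DP X δ R, 1 / (d:ℝ) :=
          Finset.sum_nonneg fun _ _ => by positivity
        linarith
      linarith
  refine (add_le_add (add_le_add (le_trans (le_of_eq ?_) b1) (le_trans (le_of_eq ?_) b2s))
    (le_trans (le_of_eq ?_) b3)).trans ?_
  · congr!
  · congr!
  · congr!
  have h6 := mul_nonneg hC40 hQ
  have h7 : (C1 + C2 * 2 + C3 + C4) * H * Y * PP g X ^ 2 = C1 * H * Y * PP g X ^ 2 +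
    C2 * 2 * H * Y * PP g X ^ 2 + C3 * H * Y * PP g X ^ 2 + C4 * (H * Y * PP g X ^ 2) := by ring
  rw [h7]
  linarith

end ShiuAux

theorem stmt_3 (α β ε : ℝ) (hα : 1 ≤ α) (hβ : 1 ≤ β) (hε : ε ∈ Set.Ioo (0 : ℝ) 1) :
    ∃ C : ℝ, ∀ g : ℕ → ℝ,
      (g 1 = 1) →
      (∀ m n : ℕ, Nat.Coprime m n → g (m * n) = g m * g n) →
      (∀ n : ℕ, 0 ≤ g n) →
      (∀ p : ℕ, p.Prime → ∀ v : ℕ, 1 ≤ v → g (p ^ v) ≤ α ^ v) →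
      (∀ n : ℕ, 1 ≤ n → g n ≤ β * (n : ℝ) ^ (ε ^ 3 / 1000)) →
      ∀ X Y H : ℝ, 2 ≤ X ^ ε → X ^ ε ≤ Y → Y ≤ X → 1 ≤ H → H ≤ X →
        ∑ l ∈ Finset.Icc 1 ⌊H⌋₊, ∑ n ∈ Finset.Icc ⌈X⌉₊ ⌊X + Y⌋₊, g n * g (n + l)
          ≤ C * H * Y *
            (∏ p ∈ (Finset.Icc 1 ⌊X⌋₊).filter Nat.Prime, (1 + (g p - 1) / (p : ℝ))) ^ 2 := by
  obtain ⟨C, hC⟩ := ShiuAux.main_bound α β ε hα hβ hε.1 hε.2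
  refine ⟨C, ?_⟩
  intro g h1 h2 h3 h4 h5 X Y H hX hXY hYX hH hHX
  exact hC g ⟨h1, h2, h3, h4, h5⟩ X Y H (by linarith) hXY hYX hH hHX
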